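/- Let Ω ⊂ ℂⁿ be a bounded convex domain whose boundary is C^{1,ε}-smooth for some ε > 0, and let o ∈ Ω. Suppose (z_k) and (w_m) are sequences in Ω with z_k → x ∈ ∂Ω and w_m → y ∈ ∂Ω. If limsup_{k,m → ∞} (z_k | w_m)_o = ∞ for the Gromov product with respect to the Kobayashi distance, then the complex affine tangent hyperplanes coincide: T_x^ℂ ∂Ω = T_y^ℂ ∂Ω. -/

import Mathlib

open Metric Set MeasureTheory Filter Topology

noncomputable section

variable {E : Type*} [NormedAddCommGroup E] [NormedSpace ℂ E]

/-- Distance from `x` to the boundary of `D`. -/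
def bdist (D : Set E) (x : E) : ℝ := Metric.infDist x (frontier D)

/-- Distance from `x` to the boundary of `D` along the complex line `x + ℂ v`. -/
def bdistDir (D : Set E) (x v : E) : ℝ :=
  Metric.infDist x (frontier D ∩ {w | ∃ c : ℂ, w = x + c • v})

/-- The infinitesimal Kobayashi (pseudo-)metric of `D ⊆ E`. -/
def kobMetric (D : Set E) (x v : E) : ℝ :=
  sInf { r : ℝ | ∃ (f : ℂ → E) (ξ : ℂ),
    DifferentiableOn ℂ f (ball (0:ℂ) 1) ∧ MapsTo f (ball (0:ℂ) 1) D ∧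
    f 0 = x ∧ ξ • derivWithin f (ball (0:ℂ) 1) 0 = v ∧ r = ‖ξ‖ }

/-- `σ` is absolutely continuous on `[a,b]`, with a.e. derivative `g`. -/
def IsACWithDeriv (σ g : ℝ → E) (a b : ℝ) : Prop :=
  IntervalIntegrable g volume a b ∧
  ∀ t ∈ Icc a b, σ t = σ a + ∫ s in a..t, g s

/-- The Kobayashi pseudo-distance of `D`, defined via lengths of absolutely
continuous curves (Venturini's description). -/
def kobDist (D : Set E) (x y : E) : ℝ :=
  sInf { r : ℝ | ∃ (a b : ℝ) (σ g : ℝ → E), a ≤ b ∧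
    IsACWithDeriv σ g a b ∧ MapsTo σ (Icc a b) D ∧ σ a = x ∧ σ b = y ∧
    r = ∫ t in a..b, kobMetric D (σ t) (g t) }

/-- Log-type convex domain, with explicit constants `C, ν > 0`. -/
def LogTypeConvexWith (D : Set E) (C ν : ℝ) : Prop :=
  IsOpen D ∧ D.Nonempty ∧ Bornology.IsBounded D ∧ Convex ℝ D ∧ 0 < C ∧ 0 < ν ∧
  ∀ z ∈ D, ∀ v : E, v ≠ 0 →
    bdistDir D z v ≤ C / |Real.log (bdist D z)| ^ (1 + ν)

/-- Log-type convex domain. -/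
def LogTypeConvex (D : Set E) : Prop := ∃ C ν : ℝ, LogTypeConvexWith D C ν

/-- A `ℂ`-convex set: every nonempty intersection with a complex affine line is
connected and simply connected. -/
def CConvex (D : Set E) : Prop :=
  ∀ z v : E, v ≠ 0 → (D ∩ {w | ∃ c : ℂ, w = z + c • v}).Nonempty →
    IsConnected (D ∩ {w | ∃ c : ℂ, w = z + c • v}) ∧
    SimplyConnectedSpace ↥(D ∩ {w | ∃ c : ℂ, w = z + c • v})

/-- Log-type `ℂ`-convex domain. -/
def LogTypeCConvex (D : Set E) : Prop :=
  IsOpen D ∧ D.Nonempty ∧ Bornology.IsBounded D ∧ CConvex D ∧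
  ∃ C ν : ℝ, 0 < C ∧ 0 < ν ∧
    ∀ z ∈ D, ∀ v : E, v ≠ 0 →
      bdistDir D z v ≤ C / |Real.log (bdist D z)| ^ (1 + ν)

/-- `σ : [a,b] → D` (with a.e. derivative `g`) is a `(λ,κ)`-almost geodesic for the
Kobayashi distance of `D`. -/
def AlmostGeodesicOn (D : Set E) (lam kap : ℝ) (σ g : ℝ → E) (a b : ℝ) : Prop :=
  MapsTo σ (Icc a b) D ∧ IsACWithDeriv σ g a b ∧
  (∀ s ∈ Icc a b, ∀ t ∈ Icc a b,
    (1 / lam) * |t - s| - kap ≤ kobDist D (σ s) (σ t) ∧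
    kobDist D (σ s) (σ t) ≤ lam * |t - s| + kap) ∧
  (∀ᵐ t ∂volume, t ∈ Icc a b → kobMetric D (σ t) (g t) ≤ lam)

/-- `σ : [a,b] → D` is a `C`-rough geodesic for the Kobayashi distance of `D`. -/
def RoughGeodesicOn (D : Set E) (C : ℝ) (σ : ℝ → E) (a b : ℝ) : Prop :=
  MapsTo σ (Icc a b) D ∧
  ∀ s ∈ Icc a b, ∀ t ∈ Icc a b,
    |t - s| - C ≤ kobDist D (σ s) (σ t) ∧ kobDist D (σ s) (σ t) ≤ |t - s| + C

/-- `ρ` is a `C¹` local defining function for `D` near `ξ` on the open set `W`. -/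
def IsLocalDefiningFn (D : Set E) (ξ : E) (W : Set E) (ρ : E → ℝ) : Prop :=
  IsOpen W ∧ ξ ∈ W ∧ ContDiffOn ℝ 1 ρ W ∧ (∀ x ∈ W, fderiv ℝ ρ x ≠ 0) ∧
  D ∩ W = {x ∈ W | ρ x < 0} ∧ frontier D ∩ W = {x ∈ W | ρ x = 0}

/-- `ξ` is a Dini-smooth boundary point of `D`: the boundary is `C¹` near `ξ` and the
unit normal admits a modulus of continuity `ω` satisfying the Dini condition. -/
def DiniSmoothBoundaryPoint (D : Set E) (ξ : E) : Prop :=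
  ∃ (W : Set E) (ρ : E → ℝ) (ω : ℝ → ℝ),
    IsLocalDefiningFn D ξ W ρ ∧
    (∀ t ∈ Icc (0:ℝ) 1, 0 ≤ ω t) ∧ MonotoneOn ω (Icc (0:ℝ) 1) ∧
    IntegrableOn (fun t => ω t / t) (Ioc (0:ℝ) 1) ∧
    ∀ x ∈ frontier D ∩ W, ∀ y ∈ frontier D ∩ W, ‖x - y‖ ≤ 1 →
      ‖(‖fderiv ℝ ρ x‖)⁻¹ • fderiv ℝ ρ x - (‖fderiv ℝ ρ y‖)⁻¹ • fderiv ℝ ρ y‖ ≤ ω ‖x - y‖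

/-- `D` has `C^{1,ε}` boundary: near every boundary point there is a `C¹` defining
function whose differential is `ε`-Hölder. -/
def HolderC1Boundary (D : Set E) (ε : ℝ) : Prop :=
  ∀ ξ ∈ frontier D, ∃ (W : Set E) (ρ : E → ℝ) (M : ℝ), 0 < M ∧
    IsLocalDefiningFn D ξ W ρ ∧
    ∀ x ∈ W, ∀ y ∈ W, ‖fderiv ℝ ρ x - fderiv ℝ ρ y‖ ≤ M * ‖x - y‖ ^ ε

/-- The complex affine tangent hyperplane of `∂D` at `x`, computed from a local
defining function `ρ`. -/
def complexTangentHyperplane (ρ : E → ℝ) (x : E) : Set E :=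
  {w : E | fderiv ℝ ρ x (w - x) = 0 ∧ fderiv ℝ ρ x ((Complex.I : ℂ) • (w - x)) = 0}

/-- The Gromov product of `x` and `y` with respect to the base point `o`, for the
Kobayashi distance of `D`. -/
def gromovProd (D : Set E) (o x y : E) : ℝ :=
  (kobDist D x o + kobDist D o y - kobDist D x y) / 2

end

/-!
On a convex domain every boundary point `ξ` carries a supporting complex functional `ℓ`, positive in
real part on the domain, and mapping a disc by `ℓ` into the half-plane shows that moving towards `ξ`
costs at least half the decay of `log |ℓ(· - ξ)|`. Two boundary points with different complex
tangent hyperplanes have zero sets of `ℓ₁`, `ℓ₂` that do not meet in the closure of the domain, for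
a common boundary point would have both hyperplanes as its own. By compactness, `|ℓ₁|` and `|ℓ₂|`
are then never both small, so a curve from `z` to `w` has to pay for leaving one boundary point and
for approaching the other:
`K(z, w) ≥ -(log |ℓ₁(z - ξ₁)|) / 2 - (log |ℓ₂(w - ξ₂)|) / 2 - const`.
Conversely `C^{1,ε}` regularity lets one fit slightly shrunken half-discs along the inner normal
(the error `s^(ε-1)` in the metric at height `s` is integrable), which gives the matching upper
bound `K(z, o) ≤ -(log |ℓ(z - ξ)|) / 2 + const` at the boundary point `ξ` nearest to `z`. The Gromov
product therefore stays bounded.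
-/

section KobMetric

variable {E : Type*} [NormedAddCommGroup E] [NormedSpace ℂ E]

/-- `f` is a holomorphic disc in `D` centred at `x` with `ξ • f'(0) = v`: a competitor in the
infimum that defines `kobMetric D x v`. -/
structure IsKobDisc (D : Set E) (x v : E) (f : ℂ → E) (ξ : ℂ) : Prop where
  differentiableOn : DifferentiableOn ℂ f (ball 0 1)
  mapsTo : MapsTo f (ball 0 1) D
  map_zero : f 0 = x
  smul_deriv : ξ • deriv f 0 = v

lemma kobMetric_eq_sInf (D : Set E) (x v : E) :
    kobMetric D x v = sInf {r : ℝ | ∃ f ξ, IsKobDisc D x v f ξ ∧ r = ‖ξ‖} := by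
  unfold kobMetric
  simp only [derivWithin_of_isOpen isOpen_ball (mem_ball_self (zero_lt_one' ℝ))]
  congr! 7 with r f ξ
  exact ⟨fun ⟨hd, hm, h0, hv, hr⟩ => ⟨⟨hd, hm, h0, hv⟩, hr⟩,
    fun ⟨⟨hd, hm, h0, hv⟩, hr⟩ => ⟨hd, hm, h0, hv, hr⟩⟩

lemma kobMetric_nonneg (D : Set E) (x v : E) : 0 ≤ kobMetric D x v := by
  rw [kobMetric_eq_sInf]
  refine Real.sInf_nonneg ?_
  rintro _ ⟨f, ξ, -, rfl⟩
  exact norm_nonneg ξ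

namespace IsKobDisc

variable {D : Set E} {x v : E} {f : ℂ → E} {ξ : ℂ}

lemma hasDerivAt (h : IsKobDisc D x v f ξ) : HasDerivAt f (deriv f 0) 0 :=
  (h.differentiableOn.differentiableAt (ball_mem_nhds 0 one_pos)).hasDerivAt

lemma neg (h : IsKobDisc D x v f ξ) : IsKobDisc D x (-v) f (-ξ) :=
  ⟨h.differentiableOn, h.mapsTo, h.map_zero, by rw [neg_smul, h.smul_deriv]⟩

lemma kobMetric_le (h : IsKobDisc D x v f ξ) : kobMetric D x v ≤ ‖ξ‖ := by
  rw [kobMetric_eq_sInf]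
  refine csInf_le ⟨0, ?_⟩ ⟨f, ξ, h, rfl⟩
  rintro _ ⟨g, η, -, rfl⟩
  exact norm_nonneg η

end IsKobDisc

lemma kobMetric_neg (D : Set E) (x v : E) : kobMetric D x (-v) = kobMetric D x v := by
  simp only [kobMetric_eq_sInf]
  congr! 3 with r
  constructor
  · rintro ⟨f, ξ, h, rfl⟩
    exact ⟨f, -ξ, by simpa only [neg_neg] using h.neg, (norm_neg ξ).symm⟩
  · rintro ⟨f, ξ, h, rfl⟩
    exact ⟨f, -ξ, h.neg, (norm_neg ξ).symm⟩

lemma isKobDisc_affine {D : Set E} {x : E} {r : ℝ} (hr : 0 < r) (hb : ball x r ⊆ D) (v : E) :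
    IsKobDisc D x v (fun ζ => x + ζ • ((r / ‖v‖ : ℝ) • v)) (‖v‖ / r : ℝ) := by
  set w : E := (r / ‖v‖ : ℝ) • v with hw
  have hderiv (ζ : ℂ) : HasDerivAt (fun ζ : ℂ => x + ζ • w) w ζ := by
    simpa only [one_smul] using ((hasDerivAt_id' ζ).smul_const w).const_add x
  have hwr : ‖w‖ ≤ r := by
    rw [hw, norm_smul, Real.norm_of_nonneg (by positivity), div_mul_comm]
    exact mul_le_of_le_one_left hr.le (div_self_le_one _)
  refine ⟨fun ζ _ => (hderiv ζ).differentiableAt.differentiableWithinAt, fun ζ hζ => hb ?_,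
    by simp only [zero_smul, add_zero], ?_⟩
  · rw [mem_ball_zero_iff] at hζ
    rw [mem_ball, dist_self_add_left, norm_smul]
    calc ‖ζ‖ * ‖w‖ ≤ ‖ζ‖ * r := by gcongr
      _ < r := mul_lt_of_lt_one_left hr hζ
  · rw [(hderiv 0).deriv, hw, Complex.coe_smul, smul_smul]
    rcases eq_or_ne v 0 with rfl | hv
    · exact smul_zero _
    · rw [div_mul_div_cancel₀ hr.ne', div_self (norm_ne_zero_iff.2 hv), one_smul]

lemma kobMetric_le_of_ball_subset {D : Set E} {x : E} {r : ℝ} (hr : 0 < r) (hb : ball x r ⊆ D)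
    (v : E) : kobMetric D x v ≤ ‖v‖ / r := by
  refine (isKobDisc_affine hr hb v).kobMetric_le.trans_eq ?_
  rw [Complex.norm_real, Real.norm_of_nonneg (by positivity)]

lemma exists_isKobDisc_of_kobMetric_lt {D : Set E} {x v : E} {c : ℝ} (hD : IsOpen D) (hx : x ∈ D)
    (h : kobMetric D x v < c) : ∃ f ξ, IsKobDisc D x v f ξ ∧ ξ ≠ 0 ∧ ‖ξ‖ < c := by
  rcases eq_or_ne v 0 with rfl | hv
  · have hc : 0 < c := (kobMetric_nonneg D x 0).trans_lt h
    refine ⟨fun _ => x, (c / 2 : ℝ), ⟨differentiableOn_const x, fun _ _ => hx, rfl, by simp⟩,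
      ?_, ?_⟩
    · exact_mod_cast (half_pos hc).ne'
    · rw [Complex.norm_real, Real.norm_of_nonneg (half_pos hc).le]
      exact half_lt_self hc
  · obtain ⟨r, hr, hb⟩ := Metric.isOpen_iff.1 hD x hx
    have hne : {r : ℝ | ∃ f ξ, IsKobDisc D x v f ξ ∧ r = ‖ξ‖}.Nonempty :=
      ⟨_, _, _, isKobDisc_affine hr hb v, rfl⟩
    rw [kobMetric_eq_sInf] at h
    obtain ⟨_, ⟨f, ξ, hf, rfl⟩, hξ⟩ := exists_lt_of_csInf_lt hne h
    refine ⟨f, ξ, hf, ?_, hξ⟩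
    rintro rfl
    exact hv (by rw [← hf.smul_deriv, zero_smul])

lemma norm_deriv_zero_le_two_mul_re {φ : ℂ → ℂ} (hd : DifferentiableOn ℂ φ (ball 0 1))
    (hpos : ∀ ζ ∈ ball (0 : ℂ) 1, 0 < (φ ζ).re) : ‖deriv φ 0‖ ≤ 2 * (φ 0).re := by
  have h0 : (0 : ℂ) ∈ ball (0 : ℂ) 1 := mem_ball_self one_pos
  set q := φ 0
  set G : ℂ → ℂ := fun ζ => (φ ζ - q) / (φ ζ + star q) with hG
  have hne (ζ : ℂ) (hζ : ζ ∈ ball 0 1) : φ ζ + star q ≠ 0 := fun h => by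
    have hre := congrArg Complex.re h
    simp only [RCLike.star_def, Complex.add_re, Complex.conj_re, Complex.zero_re] at hre
    linarith [hpos ζ hζ, hpos 0 h0]
  have hGd : DifferentiableOn ℂ G (ball 0 1) := (hd.sub_const q).div (hd.add_const _) hne
  have hG0 : G 0 = 0 := by simp only [hG, q, sub_self, zero_div]
  have hmaps : MapsTo G (ball 0 1) (closedBall (G 0) 1) := fun ζ hζ => by
    rw [hG0, mem_closedBall_zero_iff, norm_div, div_le_one (norm_pos_iff.2 (hne ζ hζ)),
      ← sq_le_sq₀ (norm_nonneg _) (norm_nonneg _), Complex.sq_norm, Complex.sq_norm,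
      Complex.normSq_apply, Complex.normSq_apply]
    simp only [RCLike.star_def, Complex.add_re, Complex.conj_re, Complex.sub_re, Complex.sub_im,
      Complex.add_im, Complex.conj_im]
    nlinarith [mul_pos (hpos ζ hζ) (hpos 0 h0)]
  have hq : q + star q = (2 * q.re : ℝ) := Complex.add_conj q
  have hGderiv : deriv G 0 = deriv φ 0 / (2 * q.re : ℝ) := by
    have hφ := (hd.differentiableAt (ball_mem_nhds 0 one_pos)).hasDerivAt
    have hne0 : q + star q ≠ 0 := hne 0 h0
    refine ((hφ.sub_const q).div (hφ.add_const (star q)) hne0).deriv.trans ?_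
    rw [← hq, sub_self, zero_mul, sub_zero, sq, mul_div_mul_right _ _ hne0]
  have hle := Complex.norm_deriv_le_one_of_mapsTo_ball hGd hmaps one_pos
  have hre : 0 < q.re := hpos 0 h0
  rwa [hGderiv, norm_div, Complex.norm_real, Real.norm_of_nonneg (by positivity),
    div_le_one (by positivity)] at hle

lemma norm_apply_le_two_mul_kobMetric_mul_re {D : Set E} (hD : IsOpen D) {l : E →L[ℂ] ℂ} {p : E}
    (hl : ∀ u ∈ D, 0 < (l (u - p)).re) {x : E} (hx : x ∈ D) (v : E) :
    ‖l v‖ ≤ 2 * kobMetric D x v * (l (x - p)).re := by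
  have hre := hl x hx
  rw [mul_comm 2, mul_assoc, ← div_le_iff₀ (by positivity)]
  refine le_of_forall_gt fun c hc => ?_
  obtain ⟨f, ξ, hf, -, hξ⟩ := exists_isKobDisc_of_kobMetric_lt hD hx hc
  have hφ : DifferentiableOn ℂ (fun ζ => l (f ζ - p)) (ball 0 1) :=
    l.differentiable.comp_differentiableOn (hf.differentiableOn.sub_const p)
  have hschwarz := norm_deriv_zero_le_two_mul_re hφ fun ζ hζ => hl _ (hf.mapsTo hζ)
  have hφ0 : HasDerivAt (fun ζ => l (f ζ - p)) (l (deriv f 0)) 0 :=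
    l.hasFDerivAt.comp_hasDerivAt 0 (hf.hasDerivAt.sub_const p)
  rw [hφ0.deriv, hf.map_zero] at hschwarz
  rw [div_lt_iff₀ (by positivity), ← hf.smul_deriv, map_smul, norm_smul]
  calc ‖ξ‖ * ‖l (deriv f 0)‖ ≤ ‖ξ‖ * (2 * (l (x - p)).re) := by gcongr
    _ < c * (2 * (l (x - p)).re) := by gcongr

lemma IsKobDisc.perturb {D : Set E} {x v : E} {f : ℂ → E} {ξ : ℂ} (hf : IsKobDisc D x v f ξ)
    (hξ : ξ ≠ 0) {r δ : ℝ} (hr : 0 < r) (hr1 : r < 1)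
    (hδ : thickening δ (f '' closedBall 0 r) ⊆ D) {a b : E} (hab : ‖a‖ + r / ‖ξ‖ * ‖b‖ < δ) :
    IsKobDisc D (x + a) (v + b) (fun ζ => f (r * ζ) + (a + ζ • ((r / ξ : ℂ) • b))) (ξ / r) := by
  have hmul {ζ : ℂ} (hζ : ζ ∈ ball 0 1) : (r * ζ : ℂ) ∈ closedBall 0 r := by
    rw [mem_ball_zero_iff] at hζ
    rw [mem_closedBall_zero_iff, norm_mul, Complex.norm_real, Real.norm_of_nonneg hr.le]
    exact mul_le_of_le_one_right hr.le hζ.le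
  have hlin (w : E) (ζ : ℂ) : HasDerivAt (fun ζ : ℂ => a + ζ • w) w ζ := by
    simpa only [one_smul] using ((hasDerivAt_id' ζ).smul_const w).const_add a
  have hr0 : (r : ℂ) ≠ 0 := Complex.ofReal_ne_zero.2 hr.ne'
  have hscale : HasDerivAt (fun ζ : ℂ => (r : ℂ) * ζ) r 0 := by
    simpa only [mul_one] using (hasDerivAt_id' (0 : ℂ)).const_mul (r : ℂ)
  have hderiv : HasDerivAt (fun ζ => f (r * ζ) + (a + ζ • ((r / ξ : ℂ) • b)))
      ((r : ℂ) • deriv f 0 + (r / ξ : ℂ) • b) 0 :=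
    (HasDerivAt.scomp_of_eq 0 hf.hasDerivAt hscale (mul_zero _).symm).add (hlin _ 0)
  refine ⟨?_, fun ζ hζ => hδ ?_, by simp [hf.map_zero], ?_⟩
  · refine (hf.differentiableOn.comp (by fun_prop) fun ζ hζ => ?_).add
      fun ζ _ => (hlin _ ζ).differentiableAt.differentiableWithinAt
    exact closedBall_subset_ball hr1 (hmul hζ)
  · refine mem_thickening_iff.2 ⟨_, mem_image_of_mem f (hmul hζ), ?_⟩
    rw [mem_ball_zero_iff] at hζ
    rw [dist_self_add_left]
    calc ‖a + ζ • ((r / ξ : ℂ) • b)‖ ≤ ‖a‖ + ‖ζ‖ * (r / ‖ξ‖ * ‖b‖) := by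
          refine (norm_add_le _ _).trans_eq ?_
          rw [norm_smul, norm_smul, norm_div, Complex.norm_real, Real.norm_of_nonneg hr.le]
      _ ≤ ‖a‖ + r / ‖ξ‖ * ‖b‖ := by
          gcongr ‖a‖ + ?_
          exact mul_le_of_le_one_left (by positivity) hζ.le
      _ < δ := hab
  · rw [hderiv.deriv, smul_add, smul_smul, smul_smul, div_mul_cancel₀ ξ hr0,
      div_mul_div_cancel₀ hr0, div_self hξ, one_smul, hf.smul_deriv]

lemma isOpen_setOf_kobMetric_lt {D : Set E} (hD : IsOpen D) (c : ℝ) :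
    IsOpen {q : E × E | q.1 ∈ D ∧ kobMetric D q.1 q.2 < c} := by
  refine isOpen_iff_mem_nhds.2 fun ⟨x, v⟩ ⟨hx, hlt⟩ => ?_
  obtain ⟨f, ξ, hf, hξ, hξc⟩ := exists_isKobDisc_of_kobMetric_lt hD hx hlt
  have hc : 0 < c := (norm_nonneg ξ).trans_lt hξc
  obtain ⟨r, hξr, hr1⟩ := exists_between ((div_lt_one hc).2 hξc)
  have hr : 0 < r := (by positivity : 0 ≤ ‖ξ‖ / c).trans_lt hξr
  have hcont : ContinuousOn f (closedBall 0 r) :=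
    hf.differentiableOn.continuousOn.mono (closedBall_subset_ball hr1)
  have hsub : f '' closedBall 0 r ⊆ D :=
    (hf.mapsTo.mono_left (closedBall_subset_ball hr1)).image_subset
  obtain ⟨δ, hδ, hδD⟩ :=
    ((isCompact_closedBall (0 : ℂ) r).image_of_continuousOn hcont).exists_thickening_subset_open
      hD hsub
  have hcontdist : Continuous fun q : E × E => ‖q.1 - x‖ + r / ‖ξ‖ * ‖q.2 - v‖ := by fun_prop
  have hnear : ∀ᶠ q : E × E in 𝓝 (x, v), ‖q.1 - x‖ + r / ‖ξ‖ * ‖q.2 - v‖ < δ :=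
    hcontdist.continuousAt.eventually_lt continuousAt_const (by simpa using hδ)
  filter_upwards [hnear, continuousAt_fst.preimage_mem_nhds (hD.mem_nhds hx)] with q hq hqD
  have hle := (hf.perturb hξ hr hr1 hδD hq).kobMetric_le
  rw [add_sub_cancel, add_sub_cancel, norm_div, Complex.norm_real, Real.norm_of_nonneg hr.le]
    at hle
  exact ⟨hqD, hle.trans_lt ((div_lt_comm₀ hc hr).1 hξr)⟩

end KobMetric

lemma absolutelyContinuousOnInterval_of_dist_le_mul_dist {X Y : Type*} [PseudoMetricSpace X]
    [PseudoMetricSpace Y] {f : ℝ → X} {g : ℝ → Y} {a b K : ℝ}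
    (hg : AbsolutelyContinuousOnInterval g a b)
    (hfg : ∀ s ∈ uIcc a b, ∀ t ∈ uIcc a b, dist (f s) (f t) ≤ K * dist (g s) (g t)) :
    AbsolutelyContinuousOnInterval f a b := by
  rw [absolutelyContinuousOnInterval_iff] at hg ⊢
  intro ε hε
  obtain ⟨δ, hδ, hgδ⟩ := hg (ε / (|K| + 1)) (by positivity)
  refine ⟨δ, hδ, fun I hI hIδ => ?_⟩
  have hgI := hgδ I hI hIδ
  rw [lt_div_iff₀ (by positivity), mul_comm, Finset.mul_sum] at hgI
  refine (Finset.sum_le_sum fun i hi => ?_).trans_lt hgI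
  have hmem := hI.1 i hi
  calc dist (f (I.2 i).1) (f (I.2 i).2) ≤ K * dist (g (I.2 i).1) (g (I.2 i).2) :=
        hfg _ hmem.1 _ hmem.2
    _ ≤ (|K| + 1) * dist (g (I.2 i).1) (g (I.2 i).2) := by
        gcongr
        linarith [le_abs_self K]

section Ite

variable {F : Type*} [NormedAddCommGroup F] {f g : ℝ → F} {a b s : ℝ}

lemma intervalIntegral_ite_le_of_le [NormedSpace ℝ F] (ha : a ≤ b) (hs : s ≤ b) :
    ∫ t in a..s, (if t ≤ b then f t else g t) = ∫ t in a..s, f t :=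
  intervalIntegral.integral_congr fun _ ht => if_pos (ht.2.trans (max_le ha hs))

lemma intervalIntegral_ite_le_of_ge [NormedSpace ℝ F] (hs : b ≤ s) :
    ∫ t in b..s, (if t ≤ b then f t else g t) = ∫ t in b..s, g t := by
  refine intervalIntegral.integral_congr_uIoo fun t ht => if_neg ?_
  rw [uIoo_of_le hs] at ht
  exact ht.1.not_ge

lemma intervalIntegrable_ite_le (ha : a ≤ b) (hs : b ≤ s) (hf : IntervalIntegrable f volume a b)
    (hg : IntervalIntegrable g volume b s) :
    IntervalIntegrable (fun t => if t ≤ b then f t else g t) volume a s := by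
  refine (hf.congr_uIoo fun t ht => (if_pos ?_).symm).trans
    (hg.congr_uIoo fun t ht => (if_neg ?_).symm)
  · rw [uIoo_of_le ha] at ht
    exact ht.2.le
  · rw [uIoo_of_le hs] at ht
    exact ht.1.not_ge

end Ite

section IsACWithDeriv

variable {E : Type*} [NormedAddCommGroup E] [NormedSpace ℂ E] {σ g : ℝ → E} {a b : ℝ}

namespace IsACWithDeriv

lemma intervalIntegrable_of_mem (h : IsACWithDeriv σ g a b) {s t : ℝ} (hs : s ∈ Icc a b)
    (ht : t ∈ Icc a b) : IntervalIntegrable g volume s t :=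
  h.1.mono_set ((uIcc_subset_Icc hs ht).trans Icc_subset_uIcc)

lemma sub_eq_integral (h : IsACWithDeriv σ g a b) {s t : ℝ} (hs : s ∈ Icc a b)
    (ht : t ∈ Icc a b) : σ t - σ s = ∫ u in s..t, g u := by
  have ha : a ∈ Icc a b := left_mem_Icc.2 (hs.1.trans hs.2)
  rw [h.2 t ht, h.2 s hs, add_sub_add_left_eq_sub, intervalIntegral.integral_interval_sub_left
    (h.intervalIntegrable_of_mem ha ht) (h.intervalIntegrable_of_mem ha hs)]

lemma continuousOn (h : IsACWithDeriv σ g a b) : ContinuousOn σ (Icc a b) := by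
  rcases le_or_gt a b with hab | hab
  · have hprim : ContinuousOn (fun t => ∫ s in a..t, g s) (Icc a b) := by
      simpa only [uIcc_of_le hab] using
        intervalIntegral.continuousOn_primitive_interval' h.1 left_mem_uIcc
    exact (hprim.const_add (σ a)).congr h.2
  · rw [Icc_eq_empty_of_lt hab]
    exact continuousOn_empty σ

lemma ae_hasDerivAt [CompleteSpace E] (h : IsACWithDeriv σ g a b) :
    ∀ᵐ t, t ∈ Ioc a b → HasDerivAt σ (g t) t := by
  filter_upwards [h.1.ae_hasDerivAt_integral,
    (Ioo_ae_eq_Ioc (μ := volume) (a := a) (b := b)).mem_iff] with t hderiv hmem ht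
  have htIoo : t ∈ Ioo a b := hmem.2 ht
  have hprim := hderiv (Icc_subset_uIcc (Ioc_subset_Icc_self ht)) a left_mem_uIcc
  refine (hprim.const_add (σ a)).congr_of_eventuallyEq ?_
  filter_upwards [Ioo_mem_nhds htIoo.1 htIoo.2] with s hs
  exact h.2 s (Ioo_subset_Icc_self hs)

lemma mono (h : IsACWithDeriv σ g a b) {s t : ℝ} (hs : s ∈ Icc a b) (ht : t ∈ Icc a b) :
    IsACWithDeriv σ g s t :=
  ⟨h.intervalIntegrable_of_mem hs ht, fun u hu => by
    rw [← h.sub_eq_integral hs ⟨hs.1.trans hu.1, hu.2.trans ht.2⟩, add_sub_cancel]⟩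

lemma reverse (h : IsACWithDeriv σ g a b) :
    IsACWithDeriv (fun t => σ (a + b - t)) (fun t => -g (a + b - t)) a b := by
  refine ⟨?_, fun t ht => ?_⟩
  · simpa only [add_sub_cancel_left, add_sub_cancel_right, Pi.neg_def] using
      (h.1.comp_sub_left (a + b)).neg.symm
  · have hmem : a + b - t ∈ Icc a b := ⟨by linarith [ht.2], by linarith [ht.1]⟩
    have hb : b ∈ Icc a b := right_mem_Icc.2 (ht.1.trans ht.2)
    have hint : ∫ s in a..t, -g (a + b - s) = σ (a + b - t) - σ b := by
      rw [intervalIntegral.integral_neg, intervalIntegral.integral_comp_sub_left g,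
        add_sub_cancel_left, ← h.sub_eq_integral hmem hb, neg_sub]
    simp only [hint, add_sub_cancel_left, add_sub_cancel]

lemma comp_sub_right (h : IsACWithDeriv σ g a b) (c : ℝ) :
    IsACWithDeriv (fun t => σ (t - c)) (fun t => g (t - c)) (a + c) (b + c) := by
  refine ⟨h.1.comp_sub_right c, fun t ht => ?_⟩
  have hmem : t - c ∈ Icc a b := ⟨by linarith [ht.1], by linarith [ht.2]⟩
  simpa only [intervalIntegral.integral_comp_sub_right g, add_sub_cancel_right] using
    h.2 (t - c) hmem

lemma clm_comp_sub_const {F : Type*} [NormedAddCommGroup F] [NormedSpace ℂ F] [CompleteSpace E]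
    [CompleteSpace F] (h : IsACWithDeriv σ g a b) (l : E →L[ℂ] F) (p : E) :
    IsACWithDeriv (fun t => l (σ t - p)) (fun t => l (g t)) a b := by
  refine ⟨⟨l.integrable_comp h.1.1, l.integrable_comp h.1.2⟩, fun t ht => ?_⟩
  have ha : a ∈ Icc a b := left_mem_Icc.2 (ht.1.trans ht.2)
  have hint : ∫ s in a..t, l (g s) = l (σ t - σ a) := by
    rw [l.intervalIntegral_comp_comm (h.intervalIntegrable_of_mem ha ht), h.sub_eq_integral ha ht]
  simp only [hint, ← map_add, sub_add_sub_cancel']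

lemma append {c : ℝ} (hab : a ≤ b) (hbc : b ≤ c) {τ k : ℝ → E} (hσ : IsACWithDeriv σ g a b)
    (hτ : IsACWithDeriv τ k b c) (hb : σ b = τ b) :
    IsACWithDeriv (fun t => if t ≤ b then σ t else τ t) (fun t => if t ≤ b then g t else k t)
      a c := by
  refine ⟨intervalIntegrable_ite_le hab hbc hσ.1 hτ.1, fun t ht => ?_⟩
  simp only [if_pos hab]
  rcases le_or_gt t b with htb | htb
  · rw [if_pos htb, intervalIntegral_ite_le_of_le hab htb]
    exact hσ.2 t ⟨ht.1, htb⟩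
  · have htau : t ∈ Icc b c := ⟨htb.le, ht.2⟩
    have hkt := hτ.intervalIntegrable_of_mem (left_mem_Icc.2 hbc) htau
    rw [if_neg htb.not_ge, hτ.2 t htau, ← hb, hσ.2 b (right_mem_Icc.2 hab), add_assoc,
      ← intervalIntegral_ite_le_of_le (g := k) hab le_rfl,
      ← intervalIntegral_ite_le_of_ge (f := g) htb.le,
      intervalIntegral.integral_add_adjacent_intervals]
    · exact intervalIntegrable_ite_le hab le_rfl hσ.1 (by simp)
    · exact intervalIntegrable_ite_le le_rfl htb.le (by simp) hkt

lemma dist_le_dist_integral_norm (h : IsACWithDeriv σ g a b) {s t : ℝ} (hs : s ∈ Icc a b)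
    (ht : t ∈ Icc a b) :
    dist (σ s) (σ t) ≤ dist (∫ u in a..s, ‖g u‖) (∫ u in a..t, ‖g u‖) := by
  have ha : a ∈ Icc a b := left_mem_Icc.2 (hs.1.trans hs.2)
  rw [dist_eq_norm, Real.dist_eq, h.sub_eq_integral ht hs,
    intervalIntegral.integral_interval_sub_left (h.intervalIntegrable_of_mem ha hs).norm
      (h.intervalIntegrable_of_mem ha ht).norm]
  exact intervalIntegral.norm_integral_le_abs_integral_norm

end IsACWithDeriv

end IsACWithDeriv

section LogNorm

lemma abs_log_sub_log_le {c x y : ℝ} (hc : 0 < c) (hx : c ≤ x) (hy : c ≤ y) :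
    |Real.log x - Real.log y| ≤ c⁻¹ * |x - y| := by
  have hlip : ∀ u ∈ Ici c, ‖deriv Real.log u‖ ≤ c⁻¹ := fun u hu => by
    rw [Real.deriv_log, Real.norm_of_nonneg (inv_nonneg.2 (hc.le.trans hu))]
    exact inv_anti₀ hc hu
  exact (convex_Ici c).norm_image_sub_le_of_norm_deriv_le
    (fun u hu => Real.differentiableAt_log (hc.trans_le hu).ne') hlip hy hx

lemma hasDerivAt_log_norm {F : Type*} [NormedAddCommGroup F] [InnerProductSpace ℝ F] {h : ℝ → F}
    {h' : F} {t : ℝ} (hh : HasDerivAt h h' t) (hne : h t ≠ 0) :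
    HasDerivAt (fun s => Real.log ‖h s‖) (inner ℝ (h t) h' / ‖h t‖ ^ 2) t := by
  have hsq := (hh.norm_sq.log (pow_ne_zero 2 (norm_ne_zero_iff.2 hne))).const_mul (1 / 2 : ℝ)
  have hlog : (fun s => Real.log ‖h s‖) = fun s => 1 / 2 * Real.log (‖h s‖ ^ 2) := by
    ext s
    rw [Real.log_pow, Nat.cast_ofNat, one_div, inv_mul_cancel_left₀ two_ne_zero]
  rw [hlog]
  exact hsq.congr_deriv (by ring)

variable {h H : ℝ → ℂ} {a b : ℝ}

lemma absolutelyContinuousOnInterval_log_norm (hab : a ≤ b) (hh : IsACWithDeriv h H a b)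
    (hne : ∀ t ∈ Icc a b, h t ≠ 0) :
    AbsolutelyContinuousOnInterval (fun t => Real.log ‖h t‖) a b := by
  obtain ⟨c, hc, hle⟩ := isCompact_Icc.exists_forall_le' hh.continuousOn.norm
    fun t ht => norm_pos_iff.2 (hne t ht)
  refine absolutelyContinuousOnInterval_of_dist_le_mul_dist (K := c⁻¹)
    (hh.1.norm.absolutelyContinuousOnInterval_intervalIntegral left_mem_uIcc) fun s hs t ht => ?_
  rw [uIcc_of_le hab] at hs ht
  calc |Real.log ‖h s‖ - Real.log ‖h t‖| ≤ c⁻¹ * |‖h s‖ - ‖h t‖| :=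
        abs_log_sub_log_le hc (hle s hs) (hle t ht)
    _ ≤ c⁻¹ * dist (h s) (h t) := by
        gcongr
        exact (abs_norm_sub_norm_le _ _).trans_eq (dist_eq_norm _ _).symm
    _ ≤ _ := by
        gcongr
        exact hh.dist_le_dist_integral_norm hs ht

lemma abs_log_norm_sub_log_norm_le_integral (hab : a ≤ b) (hh : IsACWithDeriv h H a b)
    (hne : ∀ t ∈ Icc a b, h t ≠ 0) {κ : ℝ → ℝ} (hκ : IntervalIntegrable κ volume a b)
    (hle : ∀ t ∈ Icc a b, ‖H t‖ ≤ κ t * ‖h t‖) :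
    |Real.log ‖h b‖ - Real.log ‖h a‖| ≤ ∫ t in a..b, κ t := by
  rw [← (absolutelyContinuousOnInterval_log_norm hab hh hne).integral_deriv_eq_sub,
    ← Real.norm_eq_abs]
  refine intervalIntegral.norm_integral_le_of_norm_le hab ?_ hκ
  filter_upwards [hh.ae_hasDerivAt] with t hderiv ht
  have htIcc : t ∈ Icc a b := Ioc_subset_Icc_self ht
  have hpos : 0 < ‖h t‖ := norm_pos_iff.2 (hne t htIcc)
  rw [(hasDerivAt_log_norm (hderiv ht) (hne t htIcc)).deriv, norm_div,
    Real.norm_of_nonneg (sq_nonneg ‖h t‖), div_le_iff₀ (by positivity)]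
  calc |inner ℝ (h t) (H t)| ≤ ‖h t‖ * ‖H t‖ := abs_real_inner_le_norm _ _
    _ ≤ ‖h t‖ * (κ t * ‖h t‖) := by
        gcongr
        exact hle t htIcc
    _ = κ t * ‖h t‖ ^ 2 := by ring

end LogNorm

section KobDist

variable {E : Type*} [NormedAddCommGroup E] [NormedSpace ℂ E]

lemma measurable_indicator_kobMetric [SecondCountableTopology E] [MeasurableSpace E] [BorelSpace E]
    {D : Set E} (hD : IsOpen D) :
    Measurable ((D ×ˢ univ).indicator fun q : E × E => kobMetric D q.1 q.2) := by
  refine measurable_of_Iio fun c => ?_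
  have hDm : MeasurableSet (D ×ˢ (univ : Set E)) := (hD.prod isOpen_univ).measurableSet
  rcases le_or_gt c 0 with hc | hc
  · convert MeasurableSet.empty
    refine eq_empty_of_forall_notMem fun q hq => hq.not_ge (hc.trans ?_)
    exact indicator_nonneg (fun q _ => kobMetric_nonneg D q.1 q.2) q
  · have hpre : (D ×ˢ univ).indicator (fun q : E × E => kobMetric D q.1 q.2) ⁻¹' Iio c =
        {q : E × E | q.1 ∈ D ∧ kobMetric D q.1 q.2 < c} ∪ (D ×ˢ univ)ᶜ := by
      ext q
      by_cases hq : q.1 ∈ D <;> simp [indicator, hq, hc]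
    rw [hpre]
    exact (isOpen_setOf_kobMetric_lt hD c).measurableSet.union hDm.compl

lemma aestronglyMeasurable_kobMetric [SecondCountableTopology E] {D : Set E} (hD : IsOpen D)
    {α : Type*} [MeasurableSpace α] {μ : Measure α} {σ g : α → E} (hσ : AEStronglyMeasurable σ μ)
    (hg : AEStronglyMeasurable g μ) (hmem : ∀ᵐ t ∂μ, σ t ∈ D) :
    AEStronglyMeasurable (fun t => kobMetric D (σ t) (g t)) μ := by
  borelize E
  refine ((measurable_indicator_kobMetric hD).comp_aemeasurable
    (hσ.aemeasurable.prodMk hg.aemeasurable)).aestronglyMeasurable.congr ?_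
  filter_upwards [hmem] with t ht
  exact indicator_of_mem (mk_mem_prod ht (mem_univ (g t))) _

/-- `σ : [a, b] → D` is an absolutely continuous curve from `x` to `y` with a.e. derivative `g`:
a competitor in the infimum that defines `kobDist D x y`. -/
structure IsKobCurve (D : Set E) (x y : E) (a b : ℝ) (σ g : ℝ → E) : Prop where
  le : a ≤ b
  isACWithDeriv : IsACWithDeriv σ g a b
  mapsTo : MapsTo σ (Icc a b) D
  map_left : σ a = x
  map_right : σ b = y

lemma kobDist_eq_sInf (D : Set E) (x y : E) :
    kobDist D x y = sInf {r : ℝ | ∃ a b σ g, IsKobCurve D x y a b σ g ∧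
      r = ∫ t in a..b, kobMetric D (σ t) (g t)} := by
  unfold kobDist
  congr! 11 with r a b σ g
  exact ⟨fun ⟨hab, hac, hm, hx, hy, hr⟩ => ⟨⟨hab, hac, hm, hx, hy⟩, hr⟩,
    fun ⟨⟨hab, hac, hm, hx, hy⟩, hr⟩ => ⟨hab, hac, hm, hx, hy, hr⟩⟩

namespace IsKobCurve

variable {D : Set E} {x y z p : E} {a b c : ℝ} {σ g τ k : ℝ → E}

lemma kobDist_le (h : IsKobCurve D x y a b σ g) :
    kobDist D x y ≤ ∫ t in a..b, kobMetric D (σ t) (g t) := by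
  rw [kobDist_eq_sInf]
  refine csInf_le ⟨0, ?_⟩ ⟨a, b, σ, g, h, rfl⟩
  rintro _ ⟨a, b, σ, g, h, rfl⟩
  exact intervalIntegral.integral_nonneg h.le fun _ _ => kobMetric_nonneg _ _ _

lemma line [CompleteSpace E] (hab : a ≤ b) {v : E} (h : ∀ t ∈ Icc a b, p + t • v ∈ D) :
    IsKobCurve D (p + a • v) (p + b • v) a b (fun t => p + t • v) fun _ => v where
  le := hab
  isACWithDeriv := ⟨intervalIntegrable_const, fun t _ => by
    rw [intervalIntegral.integral_const, sub_smul, add_assoc, add_sub_cancel]⟩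
  mapsTo := h
  map_left := rfl
  map_right := rfl

lemma segment [CompleteSpace E] (hD : Convex ℝ D) (hx : x ∈ D) (hy : y ∈ D) :
    IsKobCurve D x y 0 1 (fun t => x + t • (y - x)) fun _ => y - x := by
  simpa only [zero_smul, add_zero, one_smul, add_sub_cancel] using
    line zero_le_one fun _ ht => hD.add_smul_sub_mem hx hy ht

lemma reverse (h : IsKobCurve D x y a b σ g) :
    IsKobCurve D y x a b (fun t => σ (a + b - t)) fun t => -g (a + b - t) where
  le := h.le
  isACWithDeriv := h.isACWithDeriv.reverse
  mapsTo t ht := h.mapsTo ⟨by linarith [ht.2], by linarith [ht.1]⟩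
  map_left := by rw [add_sub_cancel_left, h.map_right]
  map_right := by rw [add_sub_cancel_right, h.map_left]

lemma comp_sub_right (h : IsKobCurve D x y a b σ g) (c : ℝ) :
    IsKobCurve D x y (a + c) (b + c) (fun t => σ (t - c)) fun t => g (t - c) where
  le := by linarith [h.le]
  isACWithDeriv := h.isACWithDeriv.comp_sub_right c
  mapsTo t ht := h.mapsTo ⟨by linarith [ht.1], by linarith [ht.2]⟩
  map_left := by rw [add_sub_cancel_right, h.map_left]
  map_right := by rw [add_sub_cancel_right, h.map_right]

lemma append (hσ : IsKobCurve D x y a b σ g) (hτ : IsKobCurve D y z b c τ k) :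
    IsKobCurve D x z a c (fun t => if t ≤ b then σ t else τ t)
      fun t => if t ≤ b then g t else k t where
  le := hσ.le.trans hτ.le
  isACWithDeriv := hσ.isACWithDeriv.append hσ.le hτ.le hτ.isACWithDeriv
    (hσ.map_right.trans hτ.map_left.symm)
  mapsTo t ht := by
    by_cases htb : t ≤ b
    · simpa only [if_pos htb] using hσ.mapsTo ⟨ht.1, htb⟩
    · simpa only [if_neg htb] using hτ.mapsTo ⟨(not_le.1 htb).le, ht.2⟩
  map_left := by rw [if_pos hσ.le, hσ.map_left]
  map_right := by
    rcases hτ.le.eq_or_lt with rfl | hbc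
    · rw [if_pos le_rfl, hσ.map_right, ← hτ.map_left, hτ.map_right]
    · rw [if_neg hbc.not_ge, hτ.map_right]

lemma left_part (h : IsKobCurve D x y a b σ g) {t : ℝ} (ht : t ∈ Icc a b) :
    IsKobCurve D x (σ t) a t σ g where
  le := ht.1
  isACWithDeriv := h.isACWithDeriv.mono (left_mem_Icc.2 h.le) ht
  mapsTo := h.mapsTo.mono_left (Icc_subset_Icc_right ht.2)
  map_left := h.map_left
  map_right := rfl

lemma right_part (h : IsKobCurve D x y a b σ g) {t : ℝ} (ht : t ∈ Icc a b) :
    IsKobCurve D (σ t) y t b σ g where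
  le := ht.2
  isACWithDeriv := h.isACWithDeriv.mono ht (right_mem_Icc.2 h.le)
  mapsTo := h.mapsTo.mono_left (Icc_subset_Icc_left ht.1)
  map_left := rfl
  map_right := h.map_right

lemma intervalIntegrable_kobMetric [SecondCountableTopology E] (hD : IsOpen D)
    (h : IsKobCurve D x y a b σ g) :
    IntervalIntegrable (fun t => kobMetric D (σ t) (g t)) volume a b := by
  have hcont := h.isACWithDeriv.continuousOn
  obtain ⟨r, hr, hsub⟩ := (isCompact_Icc.image_of_continuousOn hcont).exists_thickening_subset_open
    hD h.mapsTo.image_subset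
  have hint := h.isACWithDeriv.1
  rw [intervalIntegrable_iff_integrableOn_Ioc_of_le h.le] at hint ⊢
  have hσ : AEStronglyMeasurable σ (volume.restrict (Ioc a b)) :=
    (hcont.mono Ioc_subset_Icc_self).aestronglyMeasurable measurableSet_Ioc
  have hIoc : ∀ᵐ t ∂volume.restrict (Ioc a b), t ∈ Ioc a b := ae_restrict_mem measurableSet_Ioc
  refine (hint.norm.div_const r).mono' (aestronglyMeasurable_kobMetric hD hσ hint.1 ?_) ?_
  · filter_upwards [hIoc] with t ht using h.mapsTo (Ioc_subset_Icc_self ht)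
  · filter_upwards [hIoc] with t ht
    rw [Real.norm_of_nonneg (kobMetric_nonneg _ _ _)]
    refine kobMetric_le_of_ball_subset hr (Subset.trans ?_ hsub) (g t)
    exact ball_subset_thickening (mem_image_of_mem σ (Ioc_subset_Icc_self ht)) r

lemma kobDist_le_integral [SecondCountableTopology E] (hD : IsOpen D)
    (h : IsKobCurve D x y a b σ g) {κ : ℝ → ℝ} (hκ : IntervalIntegrable κ volume a b)
    (hle : ∀ t ∈ Icc a b, kobMetric D (σ t) (g t) ≤ κ t) : kobDist D x y ≤ ∫ t in a..b, κ t :=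
  h.kobDist_le.trans
    (intervalIntegral.integral_mono_on h.le (h.intervalIntegrable_kobMetric hD) hκ hle)

lemma abs_log_norm_sub_log_norm_le [SecondCountableTopology E] [CompleteSpace E] (hD : IsOpen D)
    (h : IsKobCurve D x y a b σ g) {l : E →L[ℂ] ℂ} (hl : ∀ u ∈ D, 0 < (l (u - p)).re) :
    |Real.log ‖l (y - p)‖ - Real.log ‖l (x - p)‖| ≤ 2 * ∫ t in a..b, kobMetric D (σ t) (g t) := by
  rw [← h.map_left, ← h.map_right, ← intervalIntegral.integral_const_mul]
  refine abs_log_norm_sub_log_norm_le_integral h.le (h.isACWithDeriv.clm_comp_sub_const l p)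
    (fun t ht h0 => ?_) ((h.intervalIntegrable_kobMetric hD).const_mul 2) fun t ht => ?_
  · exact (hl _ (h.mapsTo ht)).ne' (by rw [h0, Complex.zero_re])
  · refine (norm_apply_le_two_mul_kobMetric_mul_re hD hl (h.mapsTo ht) (g t)).trans ?_
    gcongr
    · exact mul_nonneg zero_le_two (kobMetric_nonneg _ _ _)
    · exact Complex.re_le_norm _

end IsKobCurve

variable {D : Set E} {x y z o : E}

lemma le_kobDist [CompleteSpace E] (hD : Convex ℝ D) (hx : x ∈ D) (hy : y ∈ D) {r : ℝ}
    (hr : ∀ a b σ g, IsKobCurve D x y a b σ g → r ≤ ∫ t in a..b, kobMetric D (σ t) (g t)) :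
    r ≤ kobDist D x y := by
  rw [kobDist_eq_sInf]
  refine le_csInf ⟨_, 0, 1, _, _, IsKobCurve.segment hD hx hy, rfl⟩ ?_
  rintro _ ⟨a, b, σ, g, h, rfl⟩
  exact hr a b σ g h

lemma kobDist_comm (D : Set E) (x y : E) : kobDist D x y = kobDist D y x := by
  have hsub (x y : E) :
      {r : ℝ | ∃ a b σ g, IsKobCurve D x y a b σ g ∧ r = ∫ t in a..b, kobMetric D (σ t) (g t)} ⊆
      {r : ℝ | ∃ a b σ g, IsKobCurve D y x a b σ g ∧
        r = ∫ t in a..b, kobMetric D (σ t) (g t)} := by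
    rintro _ ⟨a, b, σ, g, h, rfl⟩
    refine ⟨a, b, _, _, h.reverse, ?_⟩
    simp only [kobMetric_neg]
    rw [intervalIntegral.integral_comp_sub_left (fun t => kobMetric D (σ t) (g t)),
      add_sub_cancel_left, add_sub_cancel_right]
  rw [kobDist_eq_sInf, kobDist_eq_sInf, (hsub x y).antisymm (hsub y x)]

lemma kobDist_triangle [SecondCountableTopology E] [CompleteSpace E] (hD : IsOpen D)
    (hc : Convex ℝ D) (hx : x ∈ D) (hy : y ∈ D) (hz : z ∈ D) :
    kobDist D x z ≤ kobDist D x y + kobDist D y z := by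
  rw [← sub_le_iff_le_add]
  refine le_kobDist hc hx hy fun a b σ g hσ => ?_
  rw [sub_le_comm]
  refine le_kobDist hc hy hz fun a' b' τ k hτ => ?_
  have hτ' := hτ.comp_sub_right (b - a')
  rw [add_sub_cancel] at hτ'
  have hlen := intervalIntegral.integral_comp_sub_right (fun t => kobMetric D (τ t) (k t)) (b - a')
    (a := b) (b := b' + (b - a'))
  rw [sub_sub_cancel, add_sub_cancel_right] at hlen
  have hint := (hσ.append hτ').intervalIntegrable_kobMetric hD
  have hle := (hσ.append hτ').kobDist_le
  have hite (t : ℝ) : kobMetric D (if t ≤ b then σ t else τ (t - (b - a')))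
      (if t ≤ b then g t else k (t - (b - a'))) =
      if t ≤ b then kobMetric D (σ t) (g t)
      else kobMetric D (τ (t - (b - a'))) (k (t - (b - a'))) := by
    split_ifs <;> rfl
  simp only [hite] at hle hint
  have hbmem : b ∈ Icc a (b' + (b - a')) := ⟨hσ.le, hτ'.le⟩
  rw [← intervalIntegral.integral_add_adjacent_intervals
      (hint.mono_set (uIcc_subset_uIcc_left (Icc_subset_uIcc hbmem)))
      (hint.mono_set (uIcc_subset_uIcc_right (Icc_subset_uIcc hbmem))),
    intervalIntegral_ite_le_of_le hσ.le le_rfl, intervalIntegral_ite_le_of_ge hτ'.le, hlen] at hle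
  linarith

lemma kobDist_le_dist_div [SecondCountableTopology E] [CompleteSpace E] (hD : IsOpen D)
    (hc : Convex ℝ D) {r : ℝ} (hr : 0 < r) (hx : ball x r ⊆ D) (hy : ball y r ⊆ D) :
    kobDist D x y ≤ dist x y / r := by
  have hcurve := IsKobCurve.segment hc (hx (mem_ball_self hr)) (hy (mem_ball_self hr))
  have hball (t : ℝ) (ht : t ∈ Icc (0 : ℝ) 1) : ball (x + t • (y - x)) r ⊆ D := fun u hu => by
    set w := u - (x + t • (y - x)) with hw
    have hwr : ‖w‖ < r := by rwa [mem_ball, dist_eq_norm] at hu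
    have hmem := hc.add_smul_sub_mem (hx (by simpa using hwr : x + w ∈ ball x r))
      (hy (by simpa using hwr : y + w ∈ ball y r)) ht
    rwa [add_sub_add_right_eq_sub, add_right_comm, hw, add_sub_cancel] at hmem
  refine (hcurve.kobDist_le_integral hD intervalIntegrable_const fun t ht =>
    kobMetric_le_of_ball_subset hr (hball t ht) (y - x)).trans_eq ?_
  rw [intervalIntegral.integral_const, sub_zero, one_smul, dist_comm, dist_eq_norm]

/-- A curve from `z` to `w` must leave the region where `‖l₁ (· - p₁)‖ < r` before it enters the one
where `‖l₂ (· - p₂)‖ < r`. -/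
lemma log_sub_half_log_sub_half_log_le_kobDist [SecondCountableTopology E] [CompleteSpace E]
    (hD : IsOpen D) (hc : Convex ℝ D) {p₁ p₂ : E} {l₁ l₂ : E →L[ℂ] ℂ} {r : ℝ} (hr : 0 < r)
    (hl₁ : ∀ u ∈ D, 0 < (l₁ (u - p₁)).re) (hl₂ : ∀ u ∈ D, 0 < (l₂ (u - p₂)).re)
    (hmax : ∀ u ∈ D, r < max ‖l₁ (u - p₁)‖ ‖l₂ (u - p₂)‖) {z w : E} (hz : z ∈ D) (hw : w ∈ D)
    (hzr : ‖l₁ (z - p₁)‖ ≤ r) (hwr : ‖l₂ (w - p₂)‖ ≤ r) :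
    Real.log r - Real.log ‖l₁ (z - p₁)‖ / 2 - Real.log ‖l₂ (w - p₂)‖ / 2 ≤ kobDist D z w := by
  refine le_kobDist hc hz hw fun a b σ g h => ?_
  have hcont : ContinuousOn (fun t => ‖l₁ (σ t - p₁)‖) (Icc a b) :=
    (l₁.continuous.comp_continuousOn (h.isACWithDeriv.continuousOn.sub continuousOn_const)).norm
  have hwr₁ : r ≤ ‖l₁ (w - p₁)‖ := ((lt_max_iff.1 (hmax w hw)).resolve_right hwr.not_gt).le
  have hmem : r ∈ Icc ‖l₁ (σ a - p₁)‖ ‖l₁ (σ b - p₁)‖ := by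
    rw [h.map_left, h.map_right]
    exact ⟨hzr, hwr₁⟩
  obtain ⟨t, ht, htr⟩ := intermediate_value_Icc h.le hcont hmem
  replace htr : ‖l₁ (σ t - p₁)‖ = r := htr
  have htr₂ : r ≤ ‖l₂ (σ t - p₂)‖ :=
    ((lt_max_iff.1 (hmax _ (h.mapsTo ht))).resolve_left htr.not_gt).le
  have hleft := (h.left_part ht).abs_log_norm_sub_log_norm_le hD hl₁
  have hright := (h.right_part ht).abs_log_norm_sub_log_norm_le hD hl₂
  have hlog := Real.log_le_log hr htr₂
  rw [← intervalIntegral.integral_add_adjacent_intervals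
    ((h.left_part ht).intervalIntegrable_kobMetric hD)
    ((h.right_part ht).intervalIntegrable_kobMetric hD)]
  rw [htr] at hleft
  linarith [le_abs_self (Real.log r - Real.log ‖l₁ (z - p₁)‖),
    neg_abs_le (Real.log ‖l₂ (w - p₂)‖ - Real.log ‖l₂ (σ t - p₂)‖)]

end KobDist

section DefiningFunction

variable {E : Type*} [NormedAddCommGroup E] [NormedSpace ℂ E] {D W W' : Set E} {ξ x y u : E}
  {ρ ρ' : E → ℝ}

namespace IsLocalDefiningFn

lemma of_mem (h : IsLocalDefiningFn D x W ρ) (hξ : ξ ∈ W) : IsLocalDefiningFn D ξ W ρ :=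
  ⟨h.1, hξ, h.2.2⟩

lemma mem_nhds (h : IsLocalDefiningFn D ξ W ρ) : W ∈ 𝓝 ξ :=
  h.1.mem_nhds h.2.1

lemma hasFDerivAt (h : IsLocalDefiningFn D ξ W ρ) : HasFDerivAt ρ (fderiv ℝ ρ ξ) ξ :=
  ((h.2.2.1.differentiableOn one_ne_zero).differentiableAt h.mem_nhds).hasFDerivAt

lemma continuousAt_fderiv (h : IsLocalDefiningFn D ξ W ρ) : ContinuousAt (fderiv ℝ ρ) ξ :=
  (h.2.2.1.continuousOn_fderiv_of_isOpen h.1 le_rfl).continuousAt h.mem_nhds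

lemma fderiv_ne_zero (h : IsLocalDefiningFn D ξ W ρ) : fderiv ℝ ρ ξ ≠ 0 :=
  h.2.2.2.1 ξ h.2.1

lemma eq_zero (h : IsLocalDefiningFn D ξ W ρ) (hξ : ξ ∈ frontier D) : ρ ξ = 0 := by
  have hmem : ξ ∈ frontier D ∩ W := ⟨hξ, h.2.1⟩
  rw [h.2.2.2.2.2] at hmem
  exact hmem.2

lemma mem_iff (h : IsLocalDefiningFn D ξ W ρ) (hu : u ∈ W) : u ∈ D ↔ ρ u < 0 := by
  have hiff : u ∈ D ∩ W ↔ u ∈ {x ∈ W | ρ x < 0} := by rw [h.2.2.2.2.1]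
  simpa [hu] using hiff

lemma eventually_mem_of_fderiv_neg (h : IsLocalDefiningFn D ξ W ρ) (hξ : ξ ∈ frontier D) {v : E}
    (hv : fderiv ℝ ρ ξ v < 0) : ∀ᶠ t : ℝ in 𝓝[>] 0, ξ + t • v ∈ D := by
  have hline : HasDerivAt (fun t : ℝ => ξ + t • v) v 0 := by
    simpa using ((hasDerivAt_id' (0 : ℝ)).smul_const v).const_add ξ
  have hbase : ξ + (0 : ℝ) • v = ξ := by rw [zero_smul, add_zero]
  have hρ : HasFDerivAt ρ (fderiv ℝ ρ ξ) (ξ + (0 : ℝ) • v) := by rw [hbase]; exact h.hasFDerivAt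
  have hslope := (hρ.comp_hasDerivAt (0 : ℝ) hline).tendsto_slope_zero_right
  have hWnhds : W ∈ 𝓝 (ξ + (0 : ℝ) • v) := by rw [hbase]; exact h.mem_nhds
  have hW : ∀ᶠ t : ℝ in 𝓝[>] 0, ξ + t • v ∈ W :=
    nhdsWithin_le_nhds (hline.continuousAt.preimage_mem_nhds hWnhds)
  filter_upwards [hW, hslope.eventually_lt_const hv, self_mem_nhdsWithin] with t htW htneg ht
  simp only [Function.comp_apply, zero_add, hbase, h.eq_zero hξ, sub_zero, smul_eq_mul] at htneg
  rw [h.mem_iff htW]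
  exact (pos_iff_neg_of_mul_neg htneg).1 (inv_pos.2 ht)

lemma fderiv_sub_neg (hD : IsOpen D) (hc : Convex ℝ D) (h : IsLocalDefiningFn D ξ W ρ)
    (hξ : ξ ∈ frontier D) (hu : u ∈ D) : fderiv ℝ ρ ξ (u - ξ) < 0 := by
  have hle : ∀ v ∈ D, fderiv ℝ ρ ξ (v - ξ) ≤ 0 := fun v hv => by
    by_contra! hpos
    -- the points `ξ - t(v - ξ)` then lie in `D`, and `ξ` lies between them and `v`
    have hneg : fderiv ℝ ρ ξ (-(v - ξ)) < 0 := by rw [map_neg]; exact neg_lt_zero.2 hpos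
    obtain ⟨t, htD, ht⟩ :=
      ((h.eventually_mem_of_fderiv_neg hξ hneg).and self_mem_nhdsWithin).exists
    have hmem := hc htD hv (a := 1 / (1 + t)) (b := t / (1 + t)) (by positivity) (by positivity)
      (by field_simp)
    have hcomb : (1 / (1 + t)) • (ξ + t • -(v - ξ)) + (t / (1 + t)) • v = ξ := by
      have h1t : 1 + t ≠ 0 := by positivity
      match_scalars <;> field_simp
      ring
    rw [hcomb] at hmem
    exact (hD.frontier_eq ▸ hξ).2 hmem
  have himage : IsOpen (fderiv ℝ ρ ξ '' ((· - ξ) '' D)) :=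
    (fderiv ℝ ρ ξ).isOpenMap_of_ne_zero h.fderiv_ne_zero _ (isOpenMap_sub_right ξ _ hD)
  have hsub : fderiv ℝ ρ ξ '' ((· - ξ) '' D) ⊆ Iic 0 := by
    rintro _ ⟨_, ⟨v, hv, rfl⟩, rfl⟩
    exact hle v hv
  have hint := interior_maximal hsub himage
  rw [interior_Iic] at hint
  exact hint ⟨_, ⟨u, hu, rfl⟩, rfl⟩

end IsLocalDefiningFn

lemma apply_eq_zero_iff_of_neg_imp_neg {f g : E →L[ℝ] ℝ} (hf : f ≠ 0)
    (hfg : ∀ v, f v < 0 → g v < 0) (v : E) : f v = 0 ↔ g v = 0 := by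
  obtain ⟨w, hw⟩ : ∃ w, f w < 0 := by
    obtain ⟨w, hw⟩ := ContinuousLinearMap.exists_ne_zero hf
    rcases hw.lt_or_gt with hw | hw
    · exact ⟨w, hw⟩
    · exact ⟨-w, by rw [map_neg]; exact neg_lt_zero.2 hw⟩
  -- `g` is negative on the line `w + ℝ v` when `f v = 0`
  have hker (v : E) (hv : f v = 0) : g v = 0 := by
    by_contra hne
    have hneg := hfg (w - (g w / g v) • v) (by simpa [hv] using hw)
    simp [hne] at hneg
  refine ⟨hker v, fun hv => ?_⟩
  have hdiff := hker (v - (f v / f w) • w) (by simp [hw.ne])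
  have hgw := hfg w hw
  simpa [hv, hw.ne, hgw.ne] using hdiff

lemma IsLocalDefiningFn.complexTangentHyperplane_eq (hD : IsOpen D) (hc : Convex ℝ D)
    (h : IsLocalDefiningFn D x W ρ) (hx : x ∈ frontier D) (h' : IsLocalDefiningFn D u W' ρ')
    (hu : u ∈ frontier D) (hux : u ∈ complexTangentHyperplane ρ x) :
    complexTangentHyperplane ρ x = complexTangentHyperplane ρ' u := by
  obtain ⟨hre, him⟩ := hux
  have hneg (v : E) (hv : fderiv ℝ ρ' u v < 0) : fderiv ℝ ρ x v < 0 := by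
    obtain ⟨t, htD, ht⟩ :=
      ((h'.eventually_mem_of_fderiv_neg hu hv).and self_mem_nhdsWithin).exists
    have hlt := h.fderiv_sub_neg hD hc hx htD
    rw [add_sub_right_comm, map_add, hre, zero_add, map_smul, smul_eq_mul] at hlt
    exact (pos_iff_neg_of_mul_neg hlt).1 ht
  have hker := apply_eq_zero_iff_of_neg_imp_neg h'.fderiv_ne_zero hneg
  ext w
  simp only [complexTangentHyperplane, Set.mem_ofPred_eq, hker]
  rw [← sub_add_sub_cancel w u x, smul_add, map_add, map_add, hre, him, add_zero, add_zero]

/-- The complex-linear functional `ℓ` with `Re ℓ = -dρ(ξ)`: for a defining function `ρ` of a convex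
domain `D`, the complex supporting functional of `D` at `ξ`, positive towards the inside. -/
noncomputable def conormal (ρ : E → ℝ) (ξ : E) : E →L[ℂ] ℂ :=
  StrongDual.extendRCLikeₗᵢ (𝕜 := ℂ) (-(fderiv ℝ ρ ξ))

lemma norm_conormal (ρ : E → ℝ) (ξ : E) : ‖conormal ρ ξ‖ = ‖fderiv ℝ ρ ξ‖ := by
  rw [conormal, LinearIsometryEquiv.norm_map, norm_neg]

lemma conormal_apply_re (ρ : E → ℝ) (ξ v : E) : (conormal ρ ξ v).re = -fderiv ℝ ρ ξ v :=
  StrongDual.re_extendRCLike_apply (𝕜 := ℂ) (-(fderiv ℝ ρ ξ)) v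

lemma conormal_apply_im (ρ : E → ℝ) (ξ v : E) :
    (conormal ρ ξ v).im = fderiv ℝ ρ ξ (Complex.I • v) :=
  (StrongDual.im_extendRCLike_apply (𝕜 := ℂ) (-(fderiv ℝ ρ ξ)) v).trans (neg_neg _)

lemma mem_complexTangentHyperplane_iff :
    u ∈ complexTangentHyperplane ρ ξ ↔ conormal ρ ξ (u - ξ) = 0 := by
  rw [Complex.ext_iff, conormal_apply_re, conormal_apply_im]
  simp only [complexTangentHyperplane, Set.mem_ofPred_eq, Complex.zero_re, Complex.zero_im,
    neg_eq_zero]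

namespace IsLocalDefiningFn

lemma complexTangentHyperplane_congr (hD : IsOpen D) (hc : Convex ℝ D)
    (h : IsLocalDefiningFn D x W ρ) (hx : x ∈ frontier D) (h' : IsLocalDefiningFn D x W' ρ') :
    complexTangentHyperplane ρ x = complexTangentHyperplane ρ' x :=
  h.complexTangentHyperplane_eq hD hc hx h' hx <| by
    rw [mem_complexTangentHyperplane_iff, sub_self, map_zero]

lemma conormal_ne_zero (h : IsLocalDefiningFn D ξ W ρ) : conormal ρ ξ ≠ 0 := by
  rw [← norm_ne_zero_iff, norm_conormal, norm_ne_zero_iff]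
  exact h.fderiv_ne_zero

lemma continuousAt_conormal (h : IsLocalDefiningFn D ξ W ρ) : ContinuousAt (conormal ρ) ξ :=
  (LinearIsometryEquiv.continuous _).continuousAt.comp h.continuousAt_fderiv.neg

lemma conormal_sub_re_pos (hD : IsOpen D) (hc : Convex ℝ D) (h : IsLocalDefiningFn D ξ W ρ)
    (hξ : ξ ∈ frontier D) (hu : u ∈ D) : 0 < (conormal ρ ξ (u - ξ)).re := by
  rw [conormal_apply_re]
  exact neg_pos.2 (h.fderiv_sub_neg hD hc hξ hu)

end IsLocalDefiningFn

/-- The boundary of `D` is of class `C¹`: it has a local defining function near each point. -/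
def HasC1Boundary (D : Set E) : Prop :=
  ∀ ξ ∈ frontier D, ∃ W ρ, IsLocalDefiningFn D ξ W ρ

lemma exists_pos_eventually_forall_lt_of_isCompact {X Y : Type*} [TopologicalSpace X]
    [TopologicalSpace Y] {Φ : X → Y → ℝ} {q₀ : X} {K : Set Y} (hK : IsCompact K)
    (hΦ : ∀ u ∈ K, ContinuousAt (fun s : X × Y => Φ s.1 s.2) (q₀, u))
    (hpos : ∀ u ∈ K, 0 < Φ q₀ u) : ∃ r > 0, ∀ᶠ q in 𝓝 q₀, ∀ u ∈ K, r < Φ q u := by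
  have hcont : ContinuousOn (Φ q₀) K := fun u hu =>
    ((hΦ u hu).comp_of_eq (Continuous.prodMk_right q₀).continuousAt rfl).continuousWithinAt
  obtain ⟨r, hr, hle⟩ := hK.exists_forall_le' hcont hpos
  refine ⟨r / 2, half_pos hr, hK.eventually_forall_of_forall_eventually fun u hu => ?_⟩
  exact (hΦ u hu).eventually_const_lt ((half_lt_self hr).trans_le (hle u hu))

lemma exists_pos_eventually_forall_lt_max_conormal [FiniteDimensional ℂ E] (hD : IsOpen D)
    (hb : Bornology.IsBounded D) (hc : Convex ℝ D) (hC1 : HasC1Boundary D)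
    (h : IsLocalDefiningFn D x W ρ) (hx : x ∈ frontier D)
    (h' : IsLocalDefiningFn D y W' ρ') (hy : y ∈ frontier D)
    (hne : complexTangentHyperplane ρ x ≠ complexTangentHyperplane ρ' y) :
    ∃ r > 0, ∀ᶠ q : E × E in 𝓝 (x, y), ∀ u ∈ D,
      r < max ‖conormal ρ q.1 (u - q.1)‖ ‖conormal ρ' q.2 (u - q.2)‖ := by
  have hcont (u : E) : ContinuousAt (fun s : (E × E) × E =>
      max ‖conormal ρ s.1.1 (s.2 - s.1.1)‖ ‖conormal ρ' s.1.2 (s.2 - s.1.2)‖) ((x, y), u) := by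
    have h₁ : ContinuousAt (fun s : (E × E) × E => conormal ρ s.1.1) ((x, y), u) :=
      h.continuousAt_conormal.comp_of_eq (by fun_prop) rfl
    have h₂ : ContinuousAt (fun s : (E × E) × E => conormal ρ' s.1.2) ((x, y), u) :=
      h'.continuousAt_conormal.comp_of_eq (by fun_prop) rfl
    exact (h₁.clm_apply (by fun_prop)).norm.max (h₂.clm_apply (by fun_prop)).norm
  have hpos (u : E) (hu : u ∈ closure D) :
      0 < max ‖conormal ρ x (u - x)‖ ‖conormal ρ' y (u - y)‖ := by
    by_contra! hle
    obtain ⟨hux, huy⟩ := max_le_iff.1 hle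
    rw [norm_le_zero_iff] at hux huy
    have huf : u ∈ frontier D := by
      rw [hD.frontier_eq]
      refine ⟨hu, fun huD => (h.conormal_sub_re_pos hD hc hx huD).ne' ?_⟩
      rw [hux, Complex.zero_re]
    obtain ⟨_, _, hu'⟩ := hC1 u huf
    exact hne ((h.complexTangentHyperplane_eq hD hc hx hu' huf
      (mem_complexTangentHyperplane_iff.2 hux)).trans (h'.complexTangentHyperplane_eq hD hc hy hu'
      huf (mem_complexTangentHyperplane_iff.2 huy)).symm)
  obtain ⟨r, hr, hev⟩ := exists_pos_eventually_forall_lt_of_isCompact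
    (Φ := fun (q : E × E) u => max ‖conormal ρ q.1 (u - q.1)‖ ‖conormal ρ' q.2 (u - q.2)‖)
    hb.isCompact_closure (fun u _ => hcont u) hpos
  exact ⟨r, hr, hev.mono fun q hq u hu => hq u (subset_closure hu)⟩

end DefiningFunction

section HolderCap

variable {E : Type*} [NormedAddCommGroup E]

lemma norm_sub_sub_fderiv_le_of_holder [NormedSpace ℝ E] {F : Type*} [NormedAddCommGroup F]
    [NormedSpace ℝ F] {f : E → F} {ξ p : E} {M e : ℝ} (hM : 0 ≤ M) (he : 0 ≤ e)
    (hf : ∀ u ∈ closedBall ξ ‖p - ξ‖, DifferentiableAt ℝ f u)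
    (hH : ∀ u ∈ closedBall ξ ‖p - ξ‖, ‖fderiv ℝ f u - fderiv ℝ f ξ‖ ≤ M * ‖u - ξ‖ ^ e) :
    ‖f p - f ξ - fderiv ℝ f ξ (p - ξ)‖ ≤ M * ‖p - ξ‖ ^ e * ‖p - ξ‖ := by
  refine (convex_closedBall ξ ‖p - ξ‖).norm_image_sub_le_of_norm_hasFDerivWithin_le'
    (fun u hu => (hf u hu).hasFDerivAt.hasFDerivWithinAt) (fun u hu => (hH u hu).trans ?_)
    (mem_closedBall_self (norm_nonneg _)) (mem_closedBall_iff_norm.2 le_rfl)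
  gcongr
  exact mem_closedBall_iff_norm.1 hu

variable [NormedSpace ℂ E] {D W : Set E} {ρ : E → ℝ} {x ξ : E}

/-- `∂D` is of class `C^{1,ε}` near `ξ`: this is the condition which `HolderC1Boundary` imposes at
each boundary point. -/
def HolderC1At (D : Set E) (ε : ℝ) (ξ : E) : Prop :=
  ∃ (W : Set E) (ρ : E → ℝ) (M : ℝ), 0 < M ∧ IsLocalDefiningFn D ξ W ρ ∧
    ∀ x ∈ W, ∀ y ∈ W, ‖fderiv ℝ ρ x - fderiv ℝ ρ y‖ ≤ M * ‖x - y‖ ^ ε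

lemma IsLocalDefiningFn.inter (h : IsLocalDefiningFn D ξ W ρ) {V : Set E} (hV : IsOpen V)
    (hξ : ξ ∈ V) : IsLocalDefiningFn D ξ (W ∩ V) ρ := by
  obtain ⟨hW, hξW, hρ, hρ', hD, hfr⟩ := h
  refine ⟨hW.inter hV, ⟨hξW, hξ⟩, hρ.mono inter_subset_left, fun x hx => hρ' x hx.1, ?_, ?_⟩
  · rw [← inter_assoc, hD]
    ext x
    exact and_right_comm
  · rw [← inter_assoc, hfr]
    ext x
    exact and_right_comm

lemma HolderC1At.mono {ε e : ℝ} (h : HolderC1At D ε ξ) (he : 0 ≤ e) (hle : e ≤ ε) :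
    HolderC1At D e ξ := by
  obtain ⟨W, ρ, M, hM, hρ, hH⟩ := h
  refine ⟨W ∩ ball ξ (1 / 2), ρ, M, hM, hρ.inter isOpen_ball (mem_ball_self one_half_pos),
    fun x hx y hy => (hH x hx.1 y hy.1).trans ?_⟩
  have hxy : ‖x - y‖ ≤ 1 := by
    rw [← dist_eq_norm]
    linarith [dist_triangle_right x y ξ, mem_ball.1 hx.2, mem_ball.1 hy.2]
  gcongr ?_ * ?_
  exact Real.rpow_le_rpow_of_exponent_ge' (norm_nonneg _) hxy he hle

/-- `D` contains the cap of points `p` within distance `R` of `ξ` whose height `Re ℓ(p - ξ) / ‖ℓ‖`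
exceeds `M ‖p - ξ‖^(1 + e)`: a quantitative form of `C^{1,e}` regularity of `∂D` at `ξ`. -/
def ContainsHolderCap (D : Set E) (ξ : E) (ℓ : E →L[ℂ] ℂ) (M e R : ℝ) : Prop :=
  ∀ p, ‖p - ξ‖ < R → M * ‖ℓ‖ * (‖p - ξ‖ ^ e * ‖p - ξ‖) < (ℓ (p - ξ)).re → p ∈ D

lemma IsLocalDefiningFn.containsHolderCap (h : IsLocalDefiningFn D ξ W ρ) (hξ : ξ ∈ frontier D)
    {M c e R : ℝ} (hM : 0 ≤ M) (he : 0 ≤ e) (hR : ball ξ R ⊆ W)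
    (hH : ∀ u ∈ W, ‖fderiv ℝ ρ u - fderiv ℝ ρ ξ‖ ≤ M * ‖u - ξ‖ ^ e) (hc : 0 < c)
    (hcξ : c ≤ ‖conormal ρ ξ‖) : ContainsHolderCap D ξ (conormal ρ ξ) (M / c) e R := by
  intro p hp hcap
  have hsub : closedBall ξ ‖p - ξ‖ ⊆ W := (closedBall_subset_ball hp).trans hR
  have hpW : p ∈ W := hR (mem_ball_iff_norm.2 hp)
  have hrem := norm_sub_sub_fderiv_le_of_holder hM he
    (fun u hu => (h.of_mem (hsub hu)).hasFDerivAt.differentiableAt) fun u hu => hH u (hsub hu)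
  rw [h.eq_zero hξ, sub_zero, Real.norm_eq_abs] at hrem
  have hconst : M ≤ M / c * ‖conormal ρ ξ‖ := by
    rw [div_mul_eq_mul_div, le_div_iff₀ hc]
    gcongr
  have hheight : M * (‖p - ξ‖ ^ e * ‖p - ξ‖) < -fderiv ℝ ρ ξ (p - ξ) := by
    rw [← conormal_apply_re]
    refine lt_of_le_of_lt ?_ hcap
    gcongr
  rw [h.mem_iff hpW]
  linarith [(abs_le.1 hrem).2]

lemma IsLocalDefiningFn.exists_eventually_containsHolderCap (h : IsLocalDefiningFn D x W ρ)
    {M e : ℝ} (hM : 0 ≤ M) (he : 0 ≤ e)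
    (hH : ∀ u ∈ W, ∀ v ∈ W, ‖fderiv ℝ ρ u - fderiv ℝ ρ v‖ ≤ M * ‖u - v‖ ^ e) :
    ∃ M' R : ℝ, 0 ≤ M' ∧ 0 < R ∧
      ∀ᶠ ξ in 𝓝[frontier D] x, ContainsHolderCap D ξ (conormal ρ ξ) M' e R := by
  obtain ⟨δ, hδ, hball⟩ := Metric.mem_nhds_iff.1 h.mem_nhds
  have hc : 0 < ‖conormal ρ x‖ := norm_pos_iff.2 h.conormal_ne_zero
  refine ⟨M / (‖conormal ρ x‖ / 2), δ / 2, by positivity, half_pos hδ, ?_⟩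
  filter_upwards [self_mem_nhdsWithin, nhdsWithin_le_nhds (ball_mem_nhds x (half_pos hδ)),
    nhdsWithin_le_nhds (h.continuousAt_conormal.norm.eventually_const_lt (half_lt_self hc))]
    with ξ hξ hξx hcξ
  have hξW : ξ ∈ W := hball (ball_subset_ball (half_le_self hδ.le) hξx)
  have hsub : ball ξ (δ / 2) ⊆ W := (ball_subset_ball' (by
    linarith [mem_ball.1 hξx])).trans hball
  exact (h.of_mem hξW).containsHolderCap hξ hM he hsub (fun u hu => hH u hu ξ hξW) (half_pos hc)
    hcξ.le

namespace ContainsHolderCap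

variable {ℓ : E →L[ℂ] ℂ} {M e R s : ℝ} {n : E}

lemma add_smul_mem (h : ContainsHolderCap D ξ ℓ M e R) (hℓ : ℓ ≠ 0) (hn : ‖n‖ = 1)
    (hℓn : ℓ n = ‖ℓ‖) {c : ℂ} (hc : ‖c‖ < R) (hcap : M * (‖c‖ ^ e * ‖c‖) < c.re) :
    ξ + c • n ∈ D := by
  have hnorm : ‖ξ + c • n - ξ‖ = ‖c‖ := by rw [add_sub_cancel_left, norm_smul, hn, mul_one]
  refine h _ (by rwa [hnorm]) ?_
  rw [hnorm, add_sub_cancel_left, map_smul, hℓn, smul_eq_mul, Complex.re_mul_ofReal,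
    mul_right_comm]
  exact mul_lt_mul_of_pos_right hcap (norm_pos_iff.2 hℓ)

lemma ball_subset (h : ContainsHolderCap D ξ ℓ M e R) (hℓ : ℓ ≠ 0) (hn : ‖n‖ = 1)
    (hℓn : ℓ n = ‖ℓ‖) (hM : 0 ≤ M) (he : 0 ≤ e) (he1 : e ≤ 1) (hs : 0 < s) (hsR : 2 * s < R)
    (hsM : 8 * M * s ^ e < 1) : ball (ξ + s • n) (s / 2) ⊆ D := by
  intro p hp
  set v := p - (ξ + s • n) with hv
  have hvs : ‖v‖ < s / 2 := mem_ball_iff_norm.1 hp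
  have hpv : p - ξ = s • n + v := by rw [hv]; abel
  have hp2 : ‖p - ξ‖ ≤ 2 * s := by
    rw [hpv]
    refine (norm_add_le _ _).trans ?_
    rw [norm_smul, hn, Real.norm_of_nonneg hs.le]
    linarith
  have hpow : ‖p - ξ‖ ^ e ≤ 2 * s ^ e := calc
    ‖p - ξ‖ ^ e ≤ (2 * s) ^ e := by gcongr
    _ = 2 ^ e * s ^ e := Real.mul_rpow zero_le_two hs.le
    _ ≤ 2 * s ^ e := by gcongr; exact Real.rpow_le_self_of_one_le one_le_two he1
  have hre : ‖ℓ‖ * (s / 2) < (ℓ (p - ξ)).re := by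
    have hℓv : -(ℓ v).re < ‖ℓ‖ * (s / 2) := calc
      -(ℓ v).re ≤ ‖ℓ v‖ := (neg_le_abs _).trans (Complex.abs_re_le_norm _)
      _ ≤ ‖ℓ‖ * ‖v‖ := ℓ.le_opNorm v
      _ < ‖ℓ‖ * (s / 2) := by have := norm_pos_iff.2 hℓ; gcongr
    rw [hpv, map_add, ← Complex.coe_smul, map_smul, hℓn, smul_eq_mul, Complex.add_re,
      ← Complex.ofReal_mul, Complex.ofReal_re]
    linarith
  refine h p (hp2.trans_lt hsR) (lt_of_le_of_lt ?_ hre)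
  calc M * ‖ℓ‖ * (‖p - ξ‖ ^ e * ‖p - ξ‖) ≤ M * ‖ℓ‖ * (2 * s ^ e * (2 * s)) := by gcongr
    _ = ‖ℓ‖ * (s / 2) * (8 * M * s ^ e) := by ring
    _ ≤ ‖ℓ‖ * (s / 2) := mul_le_of_le_one_right (by positivity) hsM.le

end ContainsHolderCap

end HolderCap

section BoundaryProjection

variable {E : Type*} [NormedAddCommGroup E] {D : Set E} {π : E → E} {x z ξ : E}

/-- `π` sends each point of `D` to a nearest boundary point. -/
structure IsBoundaryProjection (D : Set E) (π : E → E) : Prop where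
  mem_frontier : ∀ z ∈ D, π z ∈ frontier D
  infDist_eq : ∀ z ∈ D, infDist z Dᶜ = dist z (π z)

lemma exists_isBoundaryProjection [NormedSpace ℝ E] [FiniteDimensional ℝ E] (hne : D ≠ univ) :
    ∃ π, IsBoundaryProjection D π := by
  choose! π hfr hdist using fun z (hz : z ∈ D) => exists_mem_frontier_infDist_compl_eq_dist hz hne
  exact ⟨π, hfr, hdist⟩

namespace IsBoundaryProjection

lemma ball_subset (h : IsBoundaryProjection D π) (hz : z ∈ D) : ball z ‖z - π z‖ ⊆ D := by
  rw [← dist_eq_norm, ← h.infDist_eq z hz]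
  exact ball_infDist_compl_subset

lemma tendsto (h : IsBoundaryProjection D π) (hD : IsOpen D) (hx : x ∈ frontier D) :
    Tendsto π (𝓝[D] x) (𝓝[frontier D] x) := by
  have hmem : ∀ᶠ z in 𝓝[D] x, z ∈ D := self_mem_nhdsWithin
  refine tendsto_nhdsWithin_iff.2 ⟨?_, hmem.mono h.mem_frontier⟩
  have hdist : Tendsto (fun z => 2 * dist z x) (𝓝[D] x) (𝓝 0) := by
    have hcont : Continuous fun z => 2 * dist z x := by fun_prop
    simpa only [dist_self, mul_zero] using (hcont.tendsto x).mono_left nhdsWithin_le_nhds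
  refine tendsto_iff_dist_tendsto_zero.2 (squeeze_zero' (.of_forall fun _ => dist_nonneg) ?_ hdist)
  filter_upwards [hmem] with z hz
  have hle : dist z (π z) ≤ dist z x :=
    h.infDist_eq z hz ▸ infDist_le_dist_of_mem (hD.frontier_eq ▸ hx).2
  linarith [dist_triangle_left (π z) x z]

lemma tendsto_sub (hπ : IsBoundaryProjection D π) (hD : IsOpen D) (hx : x ∈ frontier D) :
    Tendsto (fun z => z - π z) (𝓝[D] x) (𝓝 0) := by
  have hid : Tendsto (fun z => z) (𝓝[D] x) (𝓝 x) := nhdsWithin_le_nhds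
  simpa only [sub_self] using hid.sub ((hπ.tendsto hD hx).mono_right nhdsWithin_le_nhds)

end IsBoundaryProjection

lemma apply_sub_eq_norm_mul_norm [NormedSpace ℂ E] {ℓ : E →L[ℂ] ℂ}
    (h : ∀ u ∈ ball z ‖z - ξ‖, 0 ≤ (ℓ (u - ξ)).re) : ℓ (z - ξ) = ‖ℓ‖ * ‖z - ξ‖ := by
  rcases eq_or_ne z ξ with rfl | hne
  · simp
  have hs : 0 < ‖z - ξ‖ := norm_pos_iff.2 (sub_ne_zero.2 hne)
  have hle (v : E) (hv : ‖v‖ < ‖z - ξ‖) : ‖ℓ v‖ ≤ (ℓ (z - ξ)).re := by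
    obtain ⟨c, hc, hcv⟩ := Complex.exists_norm_eq_mul_self (ℓ v)
    have hmem : z - c • v ∈ ball z ‖z - ξ‖ := by
      rwa [mem_ball_iff_norm, sub_sub_cancel_left, norm_neg, norm_smul, hc, one_mul]
    have hre := h _ hmem
    rwa [sub_right_comm, map_sub, map_smul, smul_eq_mul, ← hcv, Complex.sub_re,
      Complex.ofReal_re, sub_nonneg] at hre
  have hnorm : ‖ℓ‖ ≤ (ℓ (z - ξ)).re / ‖z - ξ‖ := by
    rw [← ℓ.sSup_unit_ball_eq_norm]
    refine csSup_le ((nonempty_ball.2 one_pos).image _) ?_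
    rintro _ ⟨v, hv, rfl⟩
    rw [mem_ball_zero_iff] at hv
    have hscaled := hle (‖z - ξ‖ • v) (by
      rw [norm_smul, norm_norm]
      exact mul_lt_of_lt_one_right hs hv)
    rwa [← Complex.coe_smul, map_smul, norm_smul, Complex.norm_real, norm_norm,
      ← le_div_iff₀' hs] at hscaled
  rw [le_div_iff₀ hs] at hnorm
  have hupper := ℓ.le_opNorm (z - ξ)
  have hre := Complex.re_le_norm (ℓ (z - ξ))
  rw [Complex.eq_coe_norm_of_nonneg (Complex.re_eq_norm.1 (hre.antisymm (hupper.trans hnorm))),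
    hupper.antisymm (hnorm.trans hre), Complex.ofReal_mul]

end BoundaryProjection

section CayleyDisc

/-- The map `ζ ↦ s (1 + cζ) / (1 - cζ)`, which for `c = 1` is a conformal map of the unit disc onto
the right half-plane and for `0 < c < 1` has relatively compact image in it. -/
noncomputable def cayleyDisc (s c : ℝ) (ζ : ℂ) : ℂ :=
  s * ((1 + c * ζ) / (1 - c * ζ))

variable {s c : ℝ} {ζ : ℂ}

lemma cayleyDisc_zero (s c : ℝ) : cayleyDisc s c 0 = s := by
  simp [cayleyDisc]

lemma norm_ofReal_mul_le (hc : 0 ≤ c) (hζ : ‖ζ‖ ≤ 1) : ‖(c * ζ : ℂ)‖ ≤ c := by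
  rw [norm_mul, Complex.norm_real, Real.norm_of_nonneg hc]
  exact mul_le_of_le_one_right hc hζ

lemma one_sub_le_norm_one_sub_mul (hc : 0 ≤ c) (hζ : ‖ζ‖ ≤ 1) : 1 - c ≤ ‖(1 - c * ζ : ℂ)‖ := by
  have hle := norm_sub_norm_le (1 : ℂ) (c * ζ)
  rw [norm_one] at hle
  linarith [norm_ofReal_mul_le hc hζ]

lemma one_sub_mul_ne_zero (hc : 0 ≤ c) (hc1 : c < 1) (hζ : ‖ζ‖ ≤ 1) : (1 - c * ζ : ℂ) ≠ 0 :=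
  norm_pos_iff.1 ((sub_pos.2 hc1).trans_le (one_sub_le_norm_one_sub_mul hc hζ))

lemma hasDerivAt_cayleyDisc (hζ : (1 - c * ζ : ℂ) ≠ 0) :
    HasDerivAt (cayleyDisc s c) (2 * s * c / (1 - c * ζ) ^ 2) ζ := by
  have hlin : HasDerivAt (fun ζ : ℂ => (c : ℂ) * ζ) c ζ := by
    simpa only [mul_one] using (hasDerivAt_id' ζ).const_mul (c : ℂ)
  refine (((hlin.const_add 1).div (hlin.const_sub 1) hζ).const_mul (s : ℂ)).congr_deriv ?_
  ring

lemma norm_cayleyDisc_le (hs : 0 ≤ s) (hc : 0 ≤ c) (hc1 : c ≤ 1) (hζ : ‖ζ‖ ≤ 1) :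
    ‖cayleyDisc s c ζ‖ ≤ 2 * s / ‖(1 - c * ζ : ℂ)‖ := by
  have hnum := norm_add_le (1 : ℂ) (c * ζ)
  rw [norm_one] at hnum
  rw [cayleyDisc, norm_mul, norm_div, Complex.norm_real, Real.norm_of_nonneg hs, ← mul_div_assoc,
    mul_comm 2 s]
  gcongr
  linarith [norm_ofReal_mul_le hc hζ]

lemma cayleyDisc_re_ge (hs : 0 ≤ s) (hc : 0 ≤ c) (hc1 : c ≤ 1) (hζ : ‖ζ‖ ≤ 1) :
    s * (1 - c) / ‖(1 - c * ζ : ℂ)‖ ^ 2 ≤ (cayleyDisc s c ζ).re := by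
  have hre : (cayleyDisc s c ζ).re = s * (1 - ‖(c * ζ : ℂ)‖ ^ 2) / ‖(1 - c * ζ : ℂ)‖ ^ 2 := by
    rw [cayleyDisc, Complex.re_ofReal_mul, Complex.div_re, ← add_div, mul_div_assoc]
    simp only [Complex.sq_norm, Complex.normSq_apply, Complex.add_re, Complex.sub_re,
      Complex.add_im, Complex.sub_im, Complex.one_re, Complex.one_im]
    ring
  have hle := norm_ofReal_mul_le hc hζ
  rw [hre]
  gcongr
  nlinarith [norm_nonneg (c * ζ : ℂ)]

lemma mul_rpow_norm_cayleyDisc_lt_re {M e : ℝ} (hs : 0 < s) (hc : 0 ≤ c) (hc1 : c < 1)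
    (hM : 0 ≤ M) (he : 0 ≤ e) (he1 : e ≤ 1) (hcM : 4 * M * s ^ e < 1 - c) (hζ : ‖ζ‖ ≤ 1) :
    M * (‖cayleyDisc s c ζ‖ ^ e * ‖cayleyDisc s c ζ‖) < (cayleyDisc s c ζ).re := by
  set q := ‖(1 - c * ζ : ℂ)‖
  have hq : 0 < q := norm_pos_iff.2 (one_sub_mul_ne_zero hc hc1 hζ)
  have hq2 : q ≤ 2 := by
    have hle := norm_sub_le (1 : ℂ) (c * ζ)
    rw [norm_one] at hle
    linarith [norm_ofReal_mul_le hc hζ]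
  have hnorm : ‖cayleyDisc s c ζ‖ ≤ s * (2 / q) := by
    rw [← mul_div_assoc, mul_comm s]
    exact norm_cayleyDisc_le hs.le hc hc1.le hζ
  have hpow : ‖cayleyDisc s c ζ‖ ^ e ≤ s ^ e * (2 / q) := calc
    ‖cayleyDisc s c ζ‖ ^ e ≤ (s * (2 / q)) ^ e := by gcongr
    _ = s ^ e * (2 / q) ^ e := Real.mul_rpow hs.le (by positivity)
    _ ≤ s ^ e * (2 / q) := by
      gcongr
      exact Real.rpow_le_self_of_one_le ((one_le_div hq).2 hq2) he1
  calc M * (‖cayleyDisc s c ζ‖ ^ e * ‖cayleyDisc s c ζ‖)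
      ≤ M * (s ^ e * (2 / q) * (s * (2 / q))) := by gcongr
    _ = s * (4 * M * s ^ e) / q ^ 2 := by ring
    _ < s * (1 - c) / q ^ 2 := by gcongr
    _ ≤ (cayleyDisc s c ζ).re := cayleyDisc_re_ge hs.le hc hc1.le hζ

end CayleyDisc

section NormalEstimate

variable {E : Type*} [NormedAddCommGroup E] [NormedSpace ℂ E] {D : Set E} {ξ n : E}
  {ℓ : E →L[ℂ] ℂ} {M e R s c : ℝ}

namespace ContainsHolderCap

lemma isKobDisc_cayleyDisc (h : ContainsHolderCap D ξ ℓ M e R) (hℓ : ℓ ≠ 0) (hn : ‖n‖ = 1)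
    (hℓn : ℓ n = ‖ℓ‖) (hM : 0 ≤ M) (he : 0 ≤ e) (he1 : e ≤ 1) (hs : 0 < s) (hc : 0 < c)
    (hc1 : c < 1) (hcM : 4 * M * s ^ e < 1 - c) (hcR : 2 * s / (1 - c) < R) :
    IsKobDisc D (ξ + s • n) n (fun ζ => ξ + cayleyDisc s c ζ • n) ((1 / (2 * s * c) : ℝ) : ℂ) := by
  have hderiv {ζ : ℂ} (hζ : ζ ∈ ball 0 1) : HasDerivAt (fun ζ => ξ + cayleyDisc s c ζ • n)
      ((2 * s * c / (1 - c * ζ) ^ 2 : ℂ) • n) ζ :=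
    ((hasDerivAt_cayleyDisc (one_sub_mul_ne_zero hc.le hc1 (mem_ball_zero_iff.1 hζ).le)).smul_const
      n).const_add ξ
  refine ⟨fun ζ hζ => (hderiv hζ).differentiableAt.differentiableWithinAt, fun ζ hζ => ?_, ?_, ?_⟩
  · have hζ1 : ‖ζ‖ ≤ 1 := (mem_ball_zero_iff.1 hζ).le
    refine h.add_smul_mem hℓ hn hℓn (lt_of_le_of_lt ?_ hcR)
      (mul_rpow_norm_cayleyDisc_lt_re hs hc.le hc1 hM he he1 hcM hζ1)
    refine (norm_cayleyDisc_le hs.le hc.le hc1.le hζ1).trans ?_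
    have := sub_pos.2 hc1
    gcongr
    exact one_sub_le_norm_one_sub_mul hc.le hζ1
  · rw [cayleyDisc_zero, Complex.coe_smul]
  · have hs' : (s : ℂ) ≠ 0 := Complex.ofReal_ne_zero.2 hs.ne'
    have hc' : (c : ℂ) ≠ 0 := Complex.ofReal_ne_zero.2 hc.ne'
    have hone : ((1 / (2 * s * c) : ℝ) : ℂ) * (2 * s * c / (1 - c * 0) ^ 2) = 1 := by
      push_cast
      field_simp
      simp
    rw [(hderiv (mem_ball_self one_pos)).deriv, smul_smul, hone, one_smul]

lemma kobMetric_normal_le (h : ContainsHolderCap D ξ ℓ M e R) (hℓ : ℓ ≠ 0) (hn : ‖n‖ = 1)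
    (hℓn : ℓ n = ‖ℓ‖) (hM : 0 ≤ M) (he : 0 ≤ e) (he1 : e ≤ 1) {C : ℝ} (hCM : 4 * M < C)
    (hCR : 2 < C * R) (hs : 0 < s) (hs1 : s ≤ 1) (hsC : C * s ^ e ≤ 1 / 2) :
    kobMetric D (ξ + s • n) n ≤ s⁻¹ / 2 + C * s ^ (e - 1) := by
  have hC : 0 < C := by linarith
  have hse : 0 < s ^ e := Real.rpow_pos_of_pos hs e
  set μ := C * s ^ e with hμ_def
  have hμ : 0 < μ := by positivity
  have hcM : 4 * M * s ^ e < 1 - (1 - μ) := by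
    rw [sub_sub_cancel]
    exact mul_lt_mul_of_pos_right hCM hse
  have hcR : 2 * s / (1 - (1 - μ)) < R := by
    rw [sub_sub_cancel, div_lt_iff₀ hμ]
    calc 2 * s ≤ 2 * s ^ e := by gcongr; exact Real.self_le_rpow_of_le_one hs.le hs1 he1
      _ < C * R * s ^ e := by gcongr
      _ = R * μ := by ring
  refine (h.isKobDisc_cayleyDisc hℓ hn hℓn hM he he1 hs (by linarith) (by linarith) hcM
    hcR).kobMetric_le.trans ?_
  have hpow : C * s ^ (e - 1) = μ / s := by rw [Real.rpow_sub_one hs.ne', hμ_def, mul_div_assoc]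
  have hinv : (1 - μ)⁻¹ ≤ 1 + 2 * μ := by
    rw [inv_le_iff_one_le_mul₀ (by linarith)]
    nlinarith
  have hμ1 : 0 < 1 - μ := by linarith
  rw [hpow, Complex.norm_real, Real.norm_of_nonneg (by positivity)]
  calc 1 / (2 * s * (1 - μ)) = (1 - μ)⁻¹ / (2 * s) := by rw [inv_div_left]; ring
    _ ≤ (1 + 2 * μ) / (2 * s) := by gcongr
    _ = s⁻¹ / 2 + μ / s := by field_simp

end ContainsHolderCap

lemma intervalIntegrable_inv_div_two_add_mul_rpow {C t : ℝ} (he : 0 < e) (hs : 0 < s)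
    (ht : 0 < t) : IntervalIntegrable (fun u : ℝ => u⁻¹ / 2 + C * u ^ (e - 1)) volume s t :=
  ((intervalIntegrable_inv_iff.2
    (Or.inr (notMem_uIcc_of_lt hs ht))).div_const 2).add
    ((intervalIntegral.intervalIntegrable_rpow' (by linarith)).const_mul C)

lemma integral_inv_div_two_add_mul_rpow_le {C t : ℝ} (he : 0 < e) (hC : 0 ≤ C) (hs : 0 < s)
    (ht : 0 < t) (ht1 : t ≤ 1) :
    ∫ u in s..t, (u⁻¹ / 2 + C * u ^ (e - 1)) ≤ C / e + (Real.log t - Real.log s) / 2 := by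
  have hinv : IntervalIntegrable (fun u : ℝ => u⁻¹) volume s t :=
    intervalIntegrable_inv_iff.2 (Or.inr (notMem_uIcc_of_lt hs ht))
  have hrpow : IntervalIntegrable (fun u : ℝ => u ^ (e - 1)) volume s t :=
    intervalIntegral.intervalIntegrable_rpow' (by linarith)
  have hpow : t ^ e - s ^ e ≤ 1 := by
    linarith [Real.rpow_le_one ht.le ht1 he.le, Real.rpow_nonneg hs.le e]
  rw [intervalIntegral.integral_add (hinv.div_const 2) (hrpow.const_mul C),
    intervalIntegral.integral_div, intervalIntegral.integral_const_mul, integral_inv_of_pos hs ht,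
    integral_rpow (Or.inl (by linarith)), sub_add_cancel, Real.log_div ht.ne' hs.ne', add_comm,
    mul_div_assoc']
  gcongr
  exact mul_le_of_le_one_right hC hpow

lemma exists_pos_mul_rpow_le {δ : ℝ} (he : 0 < e) (C : ℝ) (hδ : 0 < δ) :
    ∃ s, 0 < s ∧ s ≤ 1 ∧ C * s ^ e ≤ δ := by
  have hlim : Tendsto (fun s : ℝ => C * s ^ e) (𝓝[>] 0) (𝓝 0) := by
    simpa only [Real.zero_rpow he.ne', mul_zero] using
      ((Real.continuousAt_rpow_const 0 e (Or.inr he.le)).tendsto.const_mul C).mono_left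
        nhdsWithin_le_nhds
  obtain ⟨s, hsδ, hs⟩ :=
    ((hlim.eventually_le_const hδ).and (Ioc_mem_nhdsGT one_pos)).exists
  exact ⟨s, hs.1, hs.2, hsδ⟩

lemma exists_forall_kobDist_normal_le [CompleteSpace E] [SecondCountableTopology E] (hD : IsOpen D)
    (hM : 0 ≤ M) (he : 0 < e) (he1 : e ≤ 1) (hR : 0 < R) :
    ∃ s₀ > 0, ∃ B, ∀ (ξ n : E) (ℓ : E →L[ℂ] ℂ), ContainsHolderCap D ξ ℓ M e R → ℓ ≠ 0 →
      ‖n‖ = 1 → ℓ n = ‖ℓ‖ → ball (ξ + s₀ • n) (s₀ / 2) ⊆ D ∧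
        ∀ s ∈ Ioc 0 s₀, kobDist D (ξ + s • n) (ξ + s₀ • n) ≤ B - Real.log s / 2 := by
  set C := 4 * M + 2 / R + 1
  have hRinv : 0 < 2 / R := by positivity
  have hC : 0 < C := by positivity
  have hCM : 4 * M < C := by linarith
  have hCR : 2 < C * R := by
    rw [← div_lt_iff₀ hR]
    linarith
  obtain ⟨s₀, hs₀, hs₀1, hs₀C⟩ := exists_pos_mul_rpow_le he C (one_half_pos (α := ℝ))
  refine ⟨s₀, hs₀, C / e + Real.log s₀ / 2, fun ξ n ℓ h hℓ hn hℓn => ?_⟩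
  have hsmall {s : ℝ} (hs : s ∈ Ioc 0 s₀) : s ≤ 1 ∧ C * s ^ e ≤ 1 / 2 := by
    refine ⟨hs.2.trans hs₀1, le_trans ?_ hs₀C⟩
    have := hs.1.le
    gcongr
    exact hs.2
  have hball {s : ℝ} (hs : s ∈ Ioc 0 s₀) : ball (ξ + s • n) (s / 2) ⊆ D := by
    obtain ⟨hs1, hsC⟩ := hsmall hs
    have hse : 0 < s ^ e := Real.rpow_pos_of_pos hs.1 e
    refine h.ball_subset hℓ hn hℓn hM he.le he1 hs.1 ?_ (by nlinarith)
    have hsR : C * R * s ≤ 1 / 2 * R := calc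
      C * R * s ≤ C * R * s ^ e := by
        gcongr
        exact Real.self_le_rpow_of_le_one hs.1.le hs1 he1
      _ = C * s ^ e * R := by ring
      _ ≤ 1 / 2 * R := by gcongr
    nlinarith [hs.1]
  refine ⟨hball ⟨hs₀, le_rfl⟩, fun s hs => ?_⟩
  have hIcc {t : ℝ} (ht : t ∈ Icc s s₀) : t ∈ Ioc 0 s₀ := ⟨hs.1.trans_le ht.1, ht.2⟩
  have hcurve := IsKobCurve.line hs.2 fun t ht =>
    hball (hIcc ht) (mem_ball_self (half_pos (hIcc ht).1))
  have hle := hcurve.kobDist_le_integral hD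
    (intervalIntegrable_inv_div_two_add_mul_rpow he hs.1 hs₀) fun t ht =>
      h.kobMetric_normal_le hℓ hn hℓn hM he.le he1 hCM hCR (hIcc ht).1 (hsmall (hIcc ht)).1
        (hsmall (hIcc ht)).2
  linarith [integral_inv_div_two_add_mul_rpow_le he hC.le hs.1 hs₀ hs₀1]

end NormalEstimate

section GromovProduct

variable {E : Type*} [NormedAddCommGroup E] [NormedSpace ℂ E] {D W : Set E} {ρ : E → ℝ}
  {π : E → E} {x y z o : E} {M e : ℝ}

lemma exists_forall_kobDist_le [CompleteSpace E] [SecondCountableTopology E] (hD : IsOpen D)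
    (hb : Bornology.IsBounded D) (hc : Convex ℝ D) (ho : o ∈ D) {R : ℝ} (hM : 0 ≤ M) (he : 0 < e)
    (he1 : e ≤ 1) (hR : 0 < R) :
    ∃ s₀ > 0, ∃ B, ∀ (ξ n : E) (ℓ : E →L[ℂ] ℂ), ContainsHolderCap D ξ ℓ M e R → ℓ ≠ 0 →
      ‖n‖ = 1 → ℓ n = ‖ℓ‖ → ∀ s ∈ Ioc 0 s₀, ξ + s • n ∈ D →
        kobDist D (ξ + s • n) o ≤ B - Real.log s / 2 := by
  obtain ⟨s₀, hs₀, B, hB⟩ := exists_forall_kobDist_normal_le (E := E) hD hM he he1 hR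
  obtain ⟨δ, hδ, hball⟩ := Metric.isOpen_iff.1 hD o ho
  have hr : 0 < min (s₀ / 2) δ := lt_min (half_pos hs₀) hδ
  refine ⟨s₀, hs₀, B + diam D / min (s₀ / 2) δ, fun ξ n ℓ h hℓ hn hℓn s hs hsD => ?_⟩
  obtain ⟨hsub, hnormal⟩ := hB ξ n ℓ h hℓ hn hℓn
  have hqD : ξ + s₀ • n ∈ D := hsub (mem_ball_self (half_pos hs₀))
  have hinner : kobDist D (ξ + s₀ • n) o ≤ diam D / min (s₀ / 2) δ :=
    (kobDist_le_dist_div hD hc hr ((ball_subset_ball (min_le_left _ _)).trans hsub)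
      ((ball_subset_ball (min_le_right _ _)).trans hball)).trans
      (div_le_div_of_nonneg_right (dist_le_diam_of_mem hb hqD ho) hr.le)
  linarith [kobDist_triangle hD hc hsD hqD ho, hnormal s hs]

namespace IsBoundaryProjection

lemma conormal_apply_sub (hπ : IsBoundaryProjection D π) (hD : IsOpen D) (hc : Convex ℝ D)
    (h : IsLocalDefiningFn D (π z) W ρ) (hz : z ∈ D) :
    conormal ρ (π z) (z - π z) = ‖conormal ρ (π z)‖ * ‖z - π z‖ :=
  apply_sub_eq_norm_mul_norm fun _ hu =>
    (h.conormal_sub_re_pos hD hc (hπ.mem_frontier z hz) (hπ.ball_subset hz hu)).le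

lemma eventually_norm_conormal_apply_sub_le (hπ : IsBoundaryProjection D π) (hD : IsOpen D)
    (h : IsLocalDefiningFn D x W ρ) (hx : x ∈ frontier D) {r : ℝ} (hr : 0 < r) :
    ∀ᶠ z in 𝓝[D] x, ‖conormal ρ (π z) (z - π z)‖ ≤ r := by
  have hπx := (hπ.tendsto hD hx).mono_right nhdsWithin_le_nhds
  have hconormal : Tendsto (fun z => conormal ρ (π z)) (𝓝[D] x) (𝓝 (conormal ρ x)) :=
    h.continuousAt_conormal.tendsto.comp hπx
  have hlim := (isBoundedBilinearMap_apply.continuous.norm.tendsto _).comp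
    (hconormal.prodMk_nhds (hπ.tendsto_sub hD hx))
  rw [map_zero, norm_zero] at hlim
  exact hlim.eventually_le_const hr

lemma exists_eventually_kobDist_le [FiniteDimensional ℂ E] (hπ : IsBoundaryProjection D π)
    (hD : IsOpen D) (hb : Bornology.IsBounded D) (hc : Convex ℝ D)
    (h : IsLocalDefiningFn D x W ρ) (hx : x ∈ frontier D) (hM : 0 ≤ M) (he : 0 < e)
    (he1 : e ≤ 1) (hH : ∀ u ∈ W, ∀ v ∈ W, ‖fderiv ℝ ρ u - fderiv ℝ ρ v‖ ≤ M * ‖u - v‖ ^ e)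
    (ho : o ∈ D) :
    ∃ B, ∀ᶠ z in 𝓝[D] x,
      kobDist D z o ≤ B - Real.log ‖conormal ρ (π z) (z - π z)‖ / 2 := by
  have : FiniteDimensional ℝ E := FiniteDimensional.complexToReal E
  have : ProperSpace E := FiniteDimensional.proper ℝ E
  obtain ⟨M', R, hM', hR, hcap⟩ := h.exists_eventually_containsHolderCap hM he.le hH
  obtain ⟨s₀, hs₀, B, hB⟩ := exists_forall_kobDist_le hD hb hc ho hM' he he1 hR
  have hπx := hπ.tendsto hD hx
  have hπx' := hπx.mono_right nhdsWithin_le_nhds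
  have hsmall : ∀ᶠ z in 𝓝[D] x, ‖z - π z‖ ≤ s₀ := by
    simpa only [dist_zero_right] using
      (hπ.tendsto_sub hD hx).eventually (closedBall_mem_nhds 0 hs₀)
  refine ⟨B + Real.log (‖conormal ρ x‖ + 1) / 2, ?_⟩
  filter_upwards [self_mem_nhdsWithin, hπx.eventually hcap, hπx'.eventually h.mem_nhds, hsmall,
    hπx'.eventually (h.continuousAt_conormal.norm.eventually_le_const (lt_add_one _))]
    with z hz hcapz hW hs hCz
  have hπz := h.of_mem hW
  have halign := hπ.conormal_apply_sub hD hc hπz hz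
  have hℓ : 0 < ‖conormal ρ (π z)‖ := norm_pos_iff.2 hπz.conormal_ne_zero
  have hne : z - π z ≠ 0 := sub_ne_zero.2
    ((disjoint_frontier_iff_isOpen.2 hD).ne_of_mem (hπ.mem_frontier z hz) hz).symm
  have hs0 : 0 < ‖z - π z‖ := norm_pos_iff.2 hne
  have hz_eq : π z + ‖z - π z‖ • ‖z - π z‖⁻¹ • (z - π z) = z := by
    rw [smul_inv_smul₀ hs0.ne', add_sub_cancel]
  have hkob := hB (π z) (‖z - π z‖⁻¹ • (z - π z)) _ hcapz hπz.conormal_ne_zero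
    (norm_smul_inv_norm (𝕜 := ℝ) hne) (by
      rw [← Complex.coe_smul, map_smul, halign, smul_eq_mul, Complex.ofReal_inv, mul_comm,
        mul_inv_cancel_right₀ (Complex.ofReal_ne_zero.2 hs0.ne')])
    ‖z - π z‖ ⟨hs0, hs⟩ (hz_eq.symm ▸ hz)
  rw [hz_eq] at hkob
  rw [halign, norm_mul, Complex.norm_real, Complex.norm_real, norm_norm, norm_norm,
    Real.log_mul hℓ.ne' hs0.ne']
  linarith [Real.log_le_log hℓ hCz]

lemma exists_kobDist_le_of_holderC1At [FiniteDimensional ℂ E] {ε : ℝ}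
    (hπ : IsBoundaryProjection D π) (hD : IsOpen D) (hb : Bornology.IsBounded D)
    (hc : Convex ℝ D) (hx : x ∈ frontier D) (hHx : HolderC1At D ε x) (hε : 0 < ε) (ho : o ∈ D) :
    ∃ W ρ B, IsLocalDefiningFn D x W ρ ∧
      ∀ᶠ z in 𝓝[D] x, kobDist D z o ≤ B - Real.log ‖conormal ρ (π z) (z - π z)‖ / 2 := by
  have he : 0 < min ε 1 := lt_min hε one_pos
  obtain ⟨W, ρ, M, hM, hρ, hH⟩ := hHx.mono he.le (min_le_left _ _)
  obtain ⟨B, hB⟩ :=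
    hπ.exists_eventually_kobDist_le hD hb hc hρ hx hM.le he (min_le_right _ _) hH ho
  exact ⟨W, ρ, B, hρ, hB⟩

end IsBoundaryProjection

variable {Wx Wy : Set E} {ρx ρy : E → ℝ} {ε ε' : ℝ}

lemma exists_eventually_gromovProd_le [FiniteDimensional ℂ E] (hD : IsOpen D)
    (hb : Bornology.IsBounded D) (hc : Convex ℝ D) (hC1 : HasC1Boundary D) (ho : o ∈ D)
    (hx : x ∈ frontier D) (hHx : HolderC1At D ε x) (hε : 0 < ε)
    (hy : y ∈ frontier D) (hHy : HolderC1At D ε' y) (hε' : 0 < ε')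
    (hρx : IsLocalDefiningFn D x Wx ρx) (hρy : IsLocalDefiningFn D y Wy ρy)
    (hne : complexTangentHyperplane ρx x ≠ complexTangentHyperplane ρy y) :
    ∃ B, ∀ᶠ p in 𝓝[D] x ×ˢ 𝓝[D] y, gromovProd D o p.1 p.2 ≤ B := by
  have : FiniteDimensional ℝ E := FiniteDimensional.complexToReal E
  have : ProperSpace E := FiniteDimensional.proper ℝ E
  obtain ⟨π, hπ⟩ := exists_isBoundaryProjection (D := D) fun huniv => by
    rw [huniv, frontier_univ] at hx
    exact hx
  obtain ⟨W, ρ, B, hρ, hB⟩ := hπ.exists_kobDist_le_of_holderC1At hD hb hc hx hHx hε ho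
  obtain ⟨W', ρ', B', hρ', hB'⟩ := hπ.exists_kobDist_le_of_holderC1At hD hb hc hy hHy hε' ho
  rw [hρx.complexTangentHyperplane_congr hD hc hx hρ,
    hρy.complexTangentHyperplane_congr hD hc hy hρ'] at hne
  obtain ⟨r, hr, hsep⟩ :=
    exists_pos_eventually_forall_lt_max_conormal hD hb hc hC1 hρ hx hρ' hy hne
  have hπx := (hπ.tendsto hD hx).mono_right nhdsWithin_le_nhds
  have hπy := (hπ.tendsto hD hy).mono_right nhdsWithin_le_nhds
  have hev₁ := (hπx.eventually hρ.mem_nhds).and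
    ((hπ.eventually_norm_conormal_apply_sub_le hD hρ hx hr).and hB)
  have hev₂ := (hπy.eventually hρ'.mem_nhds).and
    ((hπ.eventually_norm_conormal_apply_sub_le hD hρ' hy hr).and hB')
  refine ⟨(B + B' - Real.log r) / 2, ?_⟩
  filter_upwards [(eventually_mem_nhdsWithin.and hev₁).prod_mk (eventually_mem_nhdsWithin.and hev₂),
    (nhds_prod_eq (x := x) (y := y) ▸ hπx.prodMap hπy).eventually hsep] with p hp hsep
  obtain ⟨⟨hz, hzW, hzr, hzB⟩, hw, hwW, hwr, hwB⟩ := hp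
  have hlower := log_sub_half_log_sub_half_log_le_kobDist hD hc hr
    (fun _ => (hρ.of_mem hzW).conormal_sub_re_pos hD hc (hπ.mem_frontier _ hz))
    (fun _ => (hρ'.of_mem hwW).conormal_sub_re_pos hD hc (hπ.mem_frontier _ hw))
    hsep hz hw hzr hwr
  rw [gromovProd, kobDist_comm D o]
  linarith

theorem statement_19_general [FiniteDimensional ℂ E] (hD : IsOpen D)
    (hb : Bornology.IsBounded D) (hc : Convex ℝ D) (hC1 : HasC1Boundary D) (ho : o ∈ D)
    (hx : x ∈ frontier D) (hHx : HolderC1At D ε x) (hε : 0 < ε)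
    (hy : y ∈ frontier D) (hHy : HolderC1At D ε' y) (hε' : 0 < ε')
    {z w : ℕ → E} (hz : ∀ k, z k ∈ D) (hw : ∀ m, w m ∈ D)
    (hzx : Tendsto z atTop (𝓝 x)) (hwy : Tendsto w atTop (𝓝 y))
    (hlimsup : ∀ M : ℝ, ∀ N : ℕ, ∃ k ≥ N, ∃ m ≥ N, M < gromovProd D o (z k) (w m))
    (hρx : IsLocalDefiningFn D x Wx ρx) (hρy : IsLocalDefiningFn D y Wy ρy) :
    complexTangentHyperplane ρx x = complexTangentHyperplane ρy y := by
  by_contra hne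
  obtain ⟨B, hB⟩ :=
    exists_eventually_gromovProd_le hD hb hc hC1 ho hx hHx hε hy hHy hε' hρx hρy hne
  have hzD : Tendsto z atTop (𝓝[D] x) := tendsto_nhdsWithin_iff.2 ⟨hzx, .of_forall hz⟩
  have hwD : Tendsto w atTop (𝓝[D] y) := tendsto_nhdsWithin_iff.2 ⟨hwy, .of_forall hw⟩
  obtain ⟨N, hN⟩ := eventually_atTop_prod_self'.1
    (prod_atTop_atTop_eq (α := ℕ) (β := ℕ) ▸ (hzD.prodMap hwD).eventually hB)
  obtain ⟨k, hk, m, hm, hlt⟩ := hlimsup B N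
  exact hlt.not_ge (hN k hk m hm)

end GromovProduct

theorem statement_19 {n : ℕ}
    (Ω : Set (EuclideanSpace ℂ (Fin n)))
    (hΩo : IsOpen Ω) (hne : Ω.Nonempty) (hΩb : Bornology.IsBounded Ω)
    (hconv : Convex ℝ Ω)
    (ε : ℝ) (hε : 0 < ε) (hbd : HolderC1Boundary Ω ε)
    (o : EuclideanSpace ℂ (Fin n)) (ho : o ∈ Ω)
    (z w : ℕ → EuclideanSpace ℂ (Fin n)) (hz : ∀ k, z k ∈ Ω) (hw : ∀ m, w m ∈ Ω)
    (x y : EuclideanSpace ℂ (Fin n)) (hx : x ∈ frontier Ω) (hy : y ∈ frontier Ω)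
    (hzlim : Tendsto z atTop (𝓝 x)) (hwlim : Tendsto w atTop (𝓝 y))
    (hlimsup : ∀ M : ℝ, ∀ N : ℕ, ∃ k ≥ N, ∃ m ≥ N, M < gromovProd Ω o (z k) (w m)) :
    ∀ (Wx : Set (EuclideanSpace ℂ (Fin n))) (ρx : EuclideanSpace ℂ (Fin n) → ℝ), IsLocalDefiningFn Ω x Wx ρx →
    ∀ (Wy : Set (EuclideanSpace ℂ (Fin n))) (ρy : EuclideanSpace ℂ (Fin n) → ℝ), IsLocalDefiningFn Ω y Wy ρy →
      complexTangentHyperplane ρx x = complexTangentHyperplane ρy y := by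
  intro _ _ hρx _ _ hρy
  exact statement_19_general hΩo hΩb hconv (fun ξ hξ => (hbd ξ hξ).imp fun _ ⟨ρ, _, _, h, _⟩ =>
    ⟨ρ, h⟩) ho hx (hbd x hx) hε hy (hbd y hy) hε hz hw hzlim hwlim hlimsup hρx hρy
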